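/- There exist constants C > 0 and C₁ > 0, depending only on Ω, ω₀, ω and η⁰, such that for every T > 0, every bounded measurable potential a, every λ ≥ 1, every s ≥ C e^{4λM}(T + T² + T²‖a‖_∞^{1/2}), and every classical nonnegative solution q of the adjoint heat equation with Neumann boundary condition, one has ∫₀^T ∫_Ω e^{−sα(t,x)} ξ(t,x)² q(t,x) dx dt ≤ C₁ ∫₀^T ∫_ω e^{−sα(t,x)} ξ(t,x)² q(t,x) dx dt. -/

import Mathlib

open MeasureTheory Real Set RealInnerProductSpace

noncomputable def spaceLaplacian {N : ℕ} (f : EuclideanSpace ℝ (Fin N) → ℝ)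
    (x : EuclideanSpace ℝ (Fin N)) : ℝ :=
  ∑ i : Fin N, fderiv ℝ (fun y => fderiv ℝ f y (EuclideanSpace.single i 1)) x
    (EuclideanSpace.single i 1)

/-!
The proof follows the weighted energy `Φ(t) = ∫_Ω e ^ (-s α) q`, which vanishes at `t = 0` and
`t = T` because `α` blows up there. In `Φ'`, Green's formula moves the Laplacian from `q` to the
weight; its boundary term has a sign, since `q ≥ 0` satisfies the Neumann condition and the weight
increases along the inward normal `∇η⁰`. Once `s` is above the threshold, with `A = ‖a‖_∞` and a
constant `c > 0` such that `c ≤ ‖∇η⁰‖²` off `ω`,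
`(A + ∂ₜ - Δ) e ^ (-s α) ≤ -(s λ)² (‖∇η⁰‖² - c / 2) ξ² e ^ (-s α)`,
and integrating `Φ'` over `(0, T)` bounds the integral of `e ^ (-s α) ξ² q` over `Ω \ ω` by the one
over `ω`. Since `Φ` is linear in `q`, no gradient terms have to be absorbed.

For Green's formula up to the boundary, the vector field is cut off by `h_ε(η⁰)`, where `h_ε` is a
smooth step, so that only the divergence theorem for compactly supported fields is needed.
-/

section CarlemanEstimate

open Filter Topology InnerProductSpace Gradient Laplacian

theorem integral_fderiv_eq_zero {E F : Type*} [NormedAddCommGroup E] [NormedSpace ℝ E]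
    [FiniteDimensional ℝ E] [MeasurableSpace E] [BorelSpace E] {μ : Measure E}
    [μ.IsAddHaarMeasure] [NormedAddCommGroup F] [NormedSpace ℝ F] {V : E → F}
    (hV : ContDiff ℝ 1 V) (hc : HasCompactSupport V) : ∫ x, fderiv ℝ V x ∂μ = 0 := by
  have integrable_fderiv : Integrable (fderiv ℝ V) μ :=
    (hV.continuous_fderiv one_ne_zero).integrable_of_hasCompactSupport (hc.fderiv ℝ)
  ext v
  rw [ContinuousLinearMap.integral_apply integrable_fderiv]
  simpa using integral_smul_fderiv_eq_neg_fderiv_smul_of_integrable (μ := μ)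
    (f := fun _ => (1 : ℝ)) (g := V) (v := v) (by simp)
    (by simpa using integrable_fderiv.apply_continuousLinearMap v)
    (by simpa using hV.continuous.integrable_of_hasCompactSupport hc)
    (by fun_prop) (fun x _ => hV.differentiable one_ne_zero x)

section VectorCalculus

variable {E : Type*} [NormedAddCommGroup E] [InnerProductSpace ℝ E]

/-- The divergence of a vector field, as the trace of its derivative. -/
noncomputable def divergence (V : E → E) (x : E) : ℝ :=
  LinearMap.trace ℝ E (fderiv ℝ V x)

theorem divergence_sub {V W : E → E} {x : E} (hV : DifferentiableAt ℝ V x)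
    (hW : DifferentiableAt ℝ W x) :
    divergence (fun y => V y - W y) x = divergence V x - divergence W x := by
  simp only [divergence, fderiv_fun_sub hV hW, ContinuousLinearMap.toLinearMap_sub, map_sub]

variable [FiniteDimensional ℝ E]

theorem divergence_smul {f : E → ℝ} {V : E → E} {x : E} (hf : DifferentiableAt ℝ f x)
    (hV : DifferentiableAt ℝ V x) :
    divergence (fun y => f y • V y) x = f x * divergence V x + ⟪∇ f x, V x⟫ := by
  have trace_smulRight :
      LinearMap.trace ℝ E ((fderiv ℝ f x).smulRight (V x)) = fderiv ℝ f x (V x) :=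
    LinearMap.trace_smulRight ..
  simp only [divergence, fderiv_fun_smul hf hV, ContinuousLinearMap.toLinearMap_add,
    ContinuousLinearMap.toLinearMap_smul, map_add, map_smul, smul_eq_mul, trace_smulRight,
    inner_gradient_left]

/-- The Riesz isomorphism as a linear map: Mathlib's `InnerProductSpace.toDual` is
conjugate-linear, hence not directly a linear map over `ℝ`. -/
noncomputable def rieszEquiv : StrongDual ℝ E ≃L[ℝ] E :=
  (toDual ℝ E).symm.toContinuousLinearEquiv

theorem gradient_eq_rieszEquiv_comp (f : E → ℝ) : ∇ f = rieszEquiv ∘ fderiv ℝ f := rfl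

theorem divergence_gradient (f : E → ℝ) (x : E) : divergence (∇ f) x = Δ f x := by
  rw [divergence, LinearMap.trace_eq_sum_inner _ (stdOrthonormalBasis ℝ E),
    laplacian_eq_iteratedFDeriv_stdOrthonormalBasis]
  refine Finset.sum_congr rfl fun i _ => ?_
  rw [gradient_eq_rieszEquiv_comp, rieszEquiv.comp_fderiv, iteratedFDeriv_two_apply,
    real_inner_comm]
  exact toDual_symm_apply

theorem laplacian_eq_sum_fderiv_fderiv {ι : Type*} [Fintype ι] {f : E → ℝ} {x : E}
    (b : OrthonormalBasis ι ℝ E) :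
    Δ f x = ∑ i, fderiv ℝ (fderiv ℝ f) x (b i) (b i) := by
  simp only [laplacian_eq_iteratedFDeriv_orthonormalBasis f b, iteratedFDeriv_two_apply]
  rfl

theorem spaceLaplacian_eq_laplacian {N : ℕ} {f : EuclideanSpace ℝ (Fin N) → ℝ}
    {x : EuclideanSpace ℝ (Fin N)} (hf : DifferentiableAt ℝ (fderiv ℝ f) x) :
    spaceLaplacian f x = Δ f x := by
  rw [laplacian_eq_sum_fderiv_fderiv (EuclideanSpace.basisFun (Fin N) ℝ)]
  refine Finset.sum_congr rfl fun i _ => ?_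
  rw [fderiv_clm_apply hf (differentiableAt_const _)]
  simp

theorem gradient_comp {φ : ℝ → ℝ} {φ' : ℝ} {f : E → ℝ} {x : E} (hφ : HasDerivAt φ φ' (f x))
    (hf : DifferentiableAt ℝ f x) : ∇ (φ ∘ f) x = φ' • ∇ f x := by
  simp only [gradient_eq_rieszEquiv_comp, Function.comp_apply,
    (hφ.comp_hasFDerivAt x hf.hasFDerivAt).fderiv, map_smul]

theorem differentiableAt_gradient {f : E → ℝ} {x : E} (hf : DifferentiableAt ℝ (fderiv ℝ f) x) :
    DifferentiableAt ℝ (∇ f) x :=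
  rieszEquiv.differentiableAt.comp x hf

theorem divergence_smul_gradient_sub {f g : E → ℝ} {x : E} (hf : DifferentiableAt ℝ f x)
    (hf' : DifferentiableAt ℝ (fderiv ℝ f) x) (hg : DifferentiableAt ℝ g x)
    (hg' : DifferentiableAt ℝ (fderiv ℝ g) x) :
    divergence (fun y => f y • ∇ g y - g y • ∇ f y) x = f x * Δ g x - g x * Δ f x := by
  have hf'' := differentiableAt_gradient hf'
  have hg'' := differentiableAt_gradient hg'
  rw [divergence_sub (hf.fun_smul hg'') (hg.fun_smul hf''), divergence_smul hf hg'',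
    divergence_smul hg hf'', divergence_gradient, divergence_gradient,
    real_inner_comm (∇ f x) (∇ g x)]
  ring

theorem laplacian_comp {φ φ' : ℝ → ℝ} {φ'' : ℝ} {f : E → ℝ} {x : E}
    (hφ : ∀ r, HasDerivAt φ (φ' r) r) (hφ' : HasDerivAt φ' φ'' (f x))
    (hf : Differentiable ℝ f) (hf' : DifferentiableAt ℝ (fderiv ℝ f) x) :
    Δ (φ ∘ f) x = φ'' * ‖∇ f x‖ ^ 2 + φ' (f x) * Δ f x := by
  have gradient_eq : ∇ (φ ∘ f) = fun y => (φ' ∘ f) y • ∇ f y :=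
    funext fun y => gradient_comp (hφ _) (hf y)
  rw [← divergence_gradient, gradient_eq,
    divergence_smul (hφ'.differentiableAt.comp x (hf x)) (differentiableAt_gradient hf'),
    gradient_comp hφ' (hf x), divergence_gradient, real_inner_smul_left,
    real_inner_self_eq_norm_sq, Function.comp_apply, add_comm]

theorem integral_divergence_eq_zero
    [MeasurableSpace E] [BorelSpace E] {μ : Measure E} [μ.IsAddHaarMeasure] {V : E → E}
    (hV : ContDiff ℝ 1 V) (hc : HasCompactSupport V) : ∫ x, divergence V x ∂μ = 0 := by
  let trace : (E →L[ℝ] E) →L[ℝ] ℝ :=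
    (LinearMap.trace ℝ E ∘ₗ ContinuousLinearMap.coeLM ℝ).toContinuousLinearMap
  calc ∫ x, divergence V x ∂μ = ∫ x, trace (fderiv ℝ V x) ∂μ := rfl
    _ = trace (∫ x, fderiv ℝ V x ∂μ) := trace.integral_comp_comm <|
        (hV.continuous_fderiv one_ne_zero).integrable_of_hasCompactSupport (hc.fderiv ℝ)
    _ = 0 := by rw [integral_fderiv_eq_zero hV hc, map_zero]

end VectorCalculus

section RegularityUpToBoundary

variable {E : Type*} [NormedAddCommGroup E]

section NormedSpace

variable [NormedSpace ℝ E] {f : E → ℝ} {s t Ω : Set E}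

theorem contDiffOn_one_of_continuousOn_fderiv {F : Type*} [NormedAddCommGroup F] [NormedSpace ℝ F]
    {f : E → F} (hΩ : IsOpen Ω) (hf : ∀ x ∈ Ω, DifferentiableAt ℝ f x)
    (hf' : ContinuousOn (fderiv ℝ f) Ω) :
    ContDiffOn ℝ 1 f Ω := by
  rw [show (1 : WithTop ℕ∞) = 0 + 1 by norm_num, contDiffOn_succ_iff_fderiv_of_isOpen hΩ]
  exact ⟨fun x hx => (hf x hx).differentiableWithinAt, by simp, contDiffOn_zero.2 hf'⟩

/-- A function that is twice differentiable at every point of `s`, with second derivative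
continuous on `s`. On a closed domain this is `C²` regularity up to the boundary; unlike
`ContDiffOn ℝ 2 f s` it speaks of derivatives in the ambient space. -/
structure IsC2On (f : E → ℝ) (s : Set E) : Prop where
  differentiableAt : ∀ x ∈ s, DifferentiableAt ℝ f x
  differentiableAt_fderiv : ∀ x ∈ s, DifferentiableAt ℝ (fderiv ℝ f) x
  continuousOn_fderiv_fderiv : ContinuousOn (fderiv ℝ (fderiv ℝ f)) s

theorem isC2On_of_contDiff (hf : ContDiff ℝ 2 f) (s : Set E) : IsC2On f s where
  differentiableAt x _ := hf.differentiable two_ne_zero x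
  differentiableAt_fderiv x _ :=
    (hf.fderiv_right (m := 1) le_rfl).differentiable one_ne_zero x
  continuousOn_fderiv_fderiv :=
    ((hf.fderiv_right (m := 1) le_rfl).continuous_fderiv one_ne_zero).continuousOn

namespace IsC2On

theorem mono (hf : IsC2On f t) (hst : s ⊆ t) : IsC2On f s where
  differentiableAt x hx := hf.differentiableAt x (hst hx)
  differentiableAt_fderiv x hx := hf.differentiableAt_fderiv x (hst hx)
  continuousOn_fderiv_fderiv := hf.continuousOn_fderiv_fderiv.mono hst

theorem continuousOn (hf : IsC2On f s) : ContinuousOn f s := fun x hx =>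
  (hf.differentiableAt x hx).continuousAt.continuousWithinAt

theorem continuousOn_fderiv (hf : IsC2On f s) : ContinuousOn (fderiv ℝ f) s := fun x hx =>
  (hf.differentiableAt_fderiv x hx).continuousAt.continuousWithinAt

theorem contDiffOn_one (hf : IsC2On f Ω) (hΩ : IsOpen Ω) : ContDiffOn ℝ 1 f Ω :=
  contDiffOn_one_of_continuousOn_fderiv hΩ hf.differentiableAt hf.continuousOn_fderiv

end IsC2On

end NormedSpace

section InnerProductSpace

variable [InnerProductSpace ℝ E] [FiniteDimensional ℝ E] {f : E → ℝ} {s Ω : Set E}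

namespace IsC2On

theorem continuousOn_gradient (hf : IsC2On f s) : ContinuousOn (∇ f) s :=
  rieszEquiv.continuous.comp_continuousOn hf.continuousOn_fderiv

theorem continuousOn_laplacian (hf : IsC2On f s) : ContinuousOn (Δ f) s := by
  simp only [funext fun x => laplacian_eq_sum_fderiv_fderiv (f := f) (x := x)
    (stdOrthonormalBasis ℝ E)]
  exact continuousOn_finsetSum _ fun i _ =>
    (hf.continuousOn_fderiv_fderiv.clm_apply continuousOn_const).clm_apply continuousOn_const

theorem contDiffOn_one_gradient (hf : IsC2On f Ω) (hΩ : IsOpen Ω) : ContDiffOn ℝ 1 (∇ f) Ω :=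
  rieszEquiv.contDiff.comp_contDiffOn <| contDiffOn_one_of_continuousOn_fderiv hΩ
    hf.differentiableAt_fderiv hf.continuousOn_fderiv_fderiv

end IsC2On

end InnerProductSpace

end RegularityUpToBoundary

section BoundaryCutoff

/-- A smooth nondecreasing cutoff, equal to `0` on `(-∞, ε / 2]` and to `1` on `[ε, ∞)`. Composed
with a function vanishing on the boundary of a domain, it cuts off a boundary layer. -/
noncomputable def boundaryCutoff (ε r : ℝ) : ℝ := smoothTransition (2 * r / ε - 1)

variable {ε r : ℝ}

theorem contDiff_boundaryCutoff (ε : ℝ) : ContDiff ℝ 1 (boundaryCutoff ε) :=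
  (smoothTransition.contDiff (n := 1)).comp
    (((contDiff_const.mul contDiff_id).div_const ε).sub contDiff_const)

theorem abs_boundaryCutoff_le_one (ε r : ℝ) : |boundaryCutoff ε r| ≤ 1 :=
  (abs_of_nonneg (smoothTransition.nonneg _)).trans_le (smoothTransition.le_one _)

theorem boundaryCutoff_of_le_half (hε : 0 < ε) (hr : r ≤ ε / 2) : boundaryCutoff ε r = 0 := by
  apply smoothTransition.zero_of_nonpos
  rw [sub_nonpos, div_le_one hε]
  linarith

theorem boundaryCutoff_of_le (hε : 0 < ε) (hr : ε ≤ r) : boundaryCutoff ε r = 1 := by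
  apply smoothTransition.one_of_one_le
  rw [le_sub_iff_add_le, le_div_iff₀ hε]
  linarith

theorem deriv_boundaryCutoff_nonneg (hε : 0 < ε) (r : ℝ) : 0 ≤ deriv (boundaryCutoff ε) r :=
  Monotone.deriv_nonneg fun a b hab => smoothTransition.monotone (by gcongr)

theorem deriv_boundaryCutoff_of_lt (hε : 0 < ε) (hr : ε < r) :
    deriv (boundaryCutoff ε) r = 0 := by
  have eventually_one : boundaryCutoff ε =ᶠ[𝓝 r] fun _ => 1 :=
    (lt_mem_nhds hr).mono fun y hy => boundaryCutoff_of_le hε (le_of_lt hy)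
  rw [eventually_one.deriv_eq, deriv_const]

theorem tendsto_setIntegral_boundaryCutoff_mul {X : Type*} [TopologicalSpace X]
    [MeasurableSpace X] [OpensMeasurableSpace X] {μ : Measure X} {Ω : Set X} {η f : X → ℝ}
    (hΩ : MeasurableSet Ω) (hη : Continuous η) (hpos : ∀ x ∈ Ω, 0 < η x)
    (hf : IntegrableOn f Ω μ) :
    Tendsto (fun ε => ∫ x in Ω, boundaryCutoff ε (η x) * f x ∂μ) (𝓝[>] 0)
      (𝓝 (∫ x in Ω, f x ∂μ)) := by
  refine tendsto_integral_filter_of_dominated_convergence (fun x => ‖f x‖) ?_ ?_ hf.norm ?_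
  · exact .of_forall fun ε => (((contDiff_boundaryCutoff ε).continuous.comp
      hη).aestronglyMeasurable).mul hf.aestronglyMeasurable
  · refine .of_forall fun ε => .of_forall fun x => ?_
    rw [norm_mul]
    exact mul_le_of_le_one_left (norm_nonneg _) (abs_boundaryCutoff_le_one ε _)
  · refine (ae_restrict_iff' hΩ).2 (.of_forall fun x hx => ?_)
    refine tendsto_const_nhds.congr' ?_
    filter_upwards [Ioo_mem_nhdsGT (hpos x hx)] with ε hε
    rw [boundaryCutoff_of_le hε.1 hε.2.le, one_mul]

end BoundaryCutoff

theorem integrableOn_of_continuousOn_closure {X F : Type*} [PseudoMetricSpace X] [ProperSpace X]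
    [MeasurableSpace X] [OpensMeasurableSpace X] {μ : Measure X} [IsFiniteMeasureOnCompacts μ]
    [NormedAddCommGroup F] {f : X → F} {s : Set X} (hs : Bornology.IsBounded s)
    (hf : ContinuousOn f (closure s)) : IntegrableOn f s μ :=
  (hf.integrableOn_compact' hs.isCompact_closure isClosed_closure.measurableSet).mono_set
    subset_closure

section DivergenceInequality

variable {E : Type*} [NormedAddCommGroup E] [InnerProductSpace ℝ E] [FiniteDimensional ℝ E]
  {Ω : Set E} {η : E → ℝ} {V : E → E}

/-- A `C²` defining function of the domain `Ω`: positive inside, zero on the boundary, with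
nonvanishing gradient there. On the boundary, `∇ η` is an inward normal vector. -/
structure IsDefiningFunction (η : E → ℝ) (Ω : Set E) : Prop where
  contDiff : ContDiff ℝ 2 η
  pos : ∀ x ∈ Ω, 0 < η x
  eq_zero : ∀ x ∈ frontier Ω, η x = 0
  gradient_ne_zero : ∀ x ∈ frontier Ω, ∇ η x ≠ 0

theorem exists_forall_lt_of_lt_on_frontier {X : Type*} [PseudoMetricSpace X] [ProperSpace X]
    {Ω : Set X} {η f : X → ℝ} {δ : ℝ} (hΩ : IsOpen Ω) (hb : Bornology.IsBounded Ω)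
    (hη : ContinuousOn η (closure Ω)) (hpos : ∀ x ∈ Ω, 0 < η x)
    (hf : ContinuousOn f (closure Ω)) (hlt : ∀ x ∈ frontier Ω, f x < δ) :
    ∃ ε > 0, ∀ x ∈ Ω, η x < ε → f x < δ := by
  let K := closure Ω ∩ f ⁻¹' Ici δ
  have hK : IsCompact K := hb.isCompact_closure.of_isClosed_subset
    (hf.preimage_isClosed_of_isClosed isClosed_closure isClosed_Ici) inter_subset_left
  have pos_on_K : ∀ x ∈ K, 0 < η x := by
    rintro x ⟨hx, hδ⟩
    refine hpos x (not_not.1 fun hxΩ => (hlt x ?_).not_ge hδ)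
    rw [hΩ.frontier_eq]
    exact ⟨hx, hxΩ⟩
  obtain ⟨ε, hε, hεK⟩ := hK.exists_forall_le' (hη.mono inter_subset_left) pos_on_K
  exact ⟨ε, hε, fun x hx hxε =>
    not_le.1 fun hδ => (hεK x ⟨subset_closure hx, hδ⟩).not_gt hxε⟩

namespace IsDefiningFunction

theorem isC2On (h : IsDefiningFunction η Ω) (s : Set E) : IsC2On η s :=
  isC2On_of_contDiff h.contDiff s

theorem exists_forall_lt (h : IsDefiningFunction η Ω) (hΩ : IsOpen Ω)
    (hb : Bornology.IsBounded Ω) {f : E → ℝ} {δ : ℝ} (hf : ContinuousOn f (closure Ω))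
    (hlt : ∀ x ∈ frontier Ω, f x < δ) : ∃ ε > 0, ∀ x ∈ Ω, η x < ε → f x < δ :=
  exists_forall_lt_of_lt_on_frontier hΩ hb h.contDiff.continuous.continuousOn h.pos hf hlt

theorem exists_lt_normSq_gradient (h : IsDefiningFunction η Ω) (hΩ : IsOpen Ω)
    (hb : Bornology.IsBounded Ω) :
    ∃ c > 0, ∃ ε > 0, ∀ x ∈ Ω, η x < ε → c < ‖∇ η x‖ ^ 2 := by
  have continuousOn_normSq : ContinuousOn (fun x => ‖∇ η x‖ ^ 2) (closure Ω) :=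
    (h.isC2On _).continuousOn_gradient.norm.pow 2
  have isCompact_frontier : IsCompact (frontier Ω) :=
    hb.isCompact_closure.of_isClosed_subset isClosed_frontier frontier_subset_closure
  obtain ⟨c, hc, hcη⟩ := isCompact_frontier.exists_forall_le' (a := 0)
    (continuousOn_normSq.mono frontier_subset_closure)
    fun x hx => by have := h.gradient_ne_zero x hx; positivity
  obtain ⟨ε, hε, hεη⟩ := h.exists_forall_lt hΩ hb continuousOn_normSq.neg (δ := -(c / 2))
    fun x hx => neg_lt_neg ((half_lt_self hc).trans_le (hcη x hx))
  exact ⟨c / 2, half_pos hc, ε, hε, fun x hx hxε => neg_lt_neg_iff.1 (hεη x hx hxε)⟩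

end IsDefiningFunction

variable [MeasurableSpace E] [BorelSpace E] {μ : Measure E} [μ.IsAddHaarMeasure]

theorem setIntegral_divergence_eq_zero {K : Set E} (hΩ : IsOpen Ω) (hK : IsCompact K)
    (hKΩ : K ⊆ Ω) (hV : ContDiffOn ℝ 1 V Ω) (hVK : ∀ x ∈ Ω \ K, V x = 0) :
    ∫ x in Ω, divergence V x ∂μ = 0 := by
  let W : E → E := Ω.indicator V
  have W_eq_zero : ∀ x ∉ K, W x = 0 := fun x hx => by
    by_cases hxΩ : x ∈ Ω
    · exact (indicator_of_mem hxΩ V).trans (hVK x ⟨hxΩ, hx⟩)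
    · exact indicator_of_notMem hxΩ V
  have W_eventuallyEq_zero : ∀ x ∉ K, W =ᶠ[𝓝 x] fun _ => 0 := fun x hx =>
    eventually_of_mem (hK.isClosed.isOpen_compl.mem_nhds hx) W_eq_zero
  have W_eventuallyEq : ∀ x ∈ Ω, W =ᶠ[𝓝 x] V := fun x hx =>
    eqOn_indicator.eventuallyEq_of_mem (hΩ.mem_nhds hx)
  have hW : ContDiff ℝ 1 W := contDiff_iff_contDiffAt.2 fun x => by
    by_cases hx : x ∈ Ω
    · exact (hV.contDiffAt (hΩ.mem_nhds hx)).congr_of_eventuallyEq (W_eventuallyEq x hx)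
    · exact contDiffAt_const.congr_of_eventuallyEq (W_eventuallyEq_zero x fun h => hx (hKΩ h))
  calc ∫ x in Ω, divergence V x ∂μ = ∫ x in Ω, divergence W x ∂μ :=
        setIntegral_congr_fun hΩ.measurableSet fun x hx => by
          simp only [divergence, (W_eventuallyEq x hx).fderiv_eq]
    _ = ∫ x, divergence W x ∂μ := setIntegral_eq_integral_of_forall_compl_eq_zero fun x hx => by
          simp [divergence, (W_eventuallyEq_zero x fun h => hx (hKΩ h)).fderiv_eq]
    _ = 0 := integral_divergence_eq_zero hW (HasCompactSupport.intro hK W_eq_zero)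

theorem setIntegral_comp_mul_divergence {φ : ℝ → ℝ} {ε : ℝ} (hΩ : IsOpen Ω)
    (hb : Bornology.IsBounded Ω) (hη : ContDiff ℝ 1 η) (hη0 : ∀ x ∈ frontier Ω, η x = 0)
    (hφ : ContDiff ℝ 1 φ) (hε : 0 < ε) (hφ0 : ∀ r ≤ ε, φ r = 0)
    (hV : ContDiffOn ℝ 1 V Ω) (hVc : ContinuousOn V (closure Ω))
    (hdiv : IntegrableOn (divergence V) Ω μ) :
    ∫ x in Ω, φ (η x) * divergence V x ∂μ = -∫ x in Ω, deriv φ (η x) * ⟪∇ η x, V x⟫ ∂μ := by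
  have continuous_gradient : Continuous (∇ η) :=
    rieszEquiv.continuous.comp (hη.continuous_fderiv one_ne_zero)
  have integrable_left : IntegrableOn (fun x => φ (η x) * divergence V x) Ω μ :=
    hdiv.continuousOn_mul_of_subset (hφ.continuous.comp hη.continuous).continuousOn
      hb.isCompact_closure hΩ.measurableSet subset_closure
  have integrable_right : IntegrableOn (fun x => deriv φ (η x) * ⟪∇ η x, V x⟫) Ω μ :=
    integrableOn_of_continuousOn_closure hb <|
      ((hφ.continuous_deriv le_rfl).comp hη.continuous).continuousOn.mul
        (continuous_gradient.continuousOn.inner hVc)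
  let K := closure Ω ∩ η ⁻¹' Ici ε
  have hK : IsCompact K := hb.isCompact_closure.inter_right
    (isClosed_Ici.preimage hη.continuous)
  have hKΩ : K ⊆ Ω := fun x hx => not_not.1 fun hxΩ => by
    have := hη0 x (hΩ.frontier_eq ▸ ⟨hx.1, hxΩ⟩)
    exact hε.not_ge (this ▸ hx.2)
  have divergence_smul_eq : ∀ x ∈ Ω, divergence (fun y => (φ ∘ η) y • V y) x =
      φ (η x) * divergence V x + deriv φ (η x) * ⟪∇ η x, V x⟫ := fun x hx => by
    have hηx := hη.differentiable one_ne_zero x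
    have hφx := (hφ.differentiable one_ne_zero) (η x)
    rw [divergence_smul (hφx.comp x hηx)
      ((hV.differentiableOn one_ne_zero).differentiableAt (hΩ.mem_nhds hx)),
      gradient_comp hφx.hasDerivAt hηx, real_inner_smul_left, Function.comp_apply]
  rw [eq_neg_iff_add_eq_zero, ← integral_add integrable_left integrable_right,
    ← setIntegral_congr_fun hΩ.measurableSet divergence_smul_eq]
  refine setIntegral_divergence_eq_zero hΩ hK hKΩ ((hφ.comp hη).contDiffOn.smul hV) ?_
  rintro x ⟨hx, hxK⟩
  have hxε : η x < ε := not_le.1 fun hε => hxK ⟨subset_closure hx, hε⟩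
  rw [Function.comp_apply, hφ0 _ hxε.le, zero_smul]

namespace IsDefiningFunction

theorem integrableOn_deriv_boundaryCutoff_mul (h : IsDefiningFunction η Ω)
    (hb : Bornology.IsBounded Ω) (ε : ℝ) {f : E → ℝ} (hf : ContinuousOn f (closure Ω)) :
    IntegrableOn (fun x => deriv (boundaryCutoff ε) (η x) * f x) Ω μ :=
  integrableOn_of_continuousOn_closure hb <|
    (((contDiff_boundaryCutoff ε).continuous_deriv le_rfl).comp
      h.contDiff.continuous).continuousOn.mul hf

theorem setIntegral_deriv_boundaryCutoff_mul_mono (h : IsDefiningFunction η Ω) (hΩ : IsOpen Ω)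
    (hb : Bornology.IsBounded Ω) {ε : ℝ} (hε : 0 < ε) {f g : E → ℝ}
    (hf : ContinuousOn f (closure Ω)) (hg : ContinuousOn g (closure Ω))
    (hfg : ∀ x ∈ Ω, η x ≤ ε → f x ≤ g x) :
    ∫ x in Ω, deriv (boundaryCutoff ε) (η x) * f x ∂μ ≤
      ∫ x in Ω, deriv (boundaryCutoff ε) (η x) * g x ∂μ := by
  refine setIntegral_mono_on (h.integrableOn_deriv_boundaryCutoff_mul hb ε hf)
    (h.integrableOn_deriv_boundaryCutoff_mul hb ε hg) hΩ.measurableSet fun x hx => ?_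
  rcases lt_or_ge ε (η x) with hηx | hηx
  · simp only [deriv_boundaryCutoff_of_lt hε hηx, zero_mul, le_refl]
  · exact mul_le_mul_of_nonneg_left (hfg x hx hηx) (deriv_boundaryCutoff_nonneg hε _)

theorem setIntegral_boundaryCutoff_mul_divergence (h : IsDefiningFunction η Ω) (hΩ : IsOpen Ω)
    (hb : Bornology.IsBounded Ω) {ε : ℝ} (hε : 0 < ε) (hV : ContDiffOn ℝ 1 V Ω)
    (hVc : ContinuousOn V (closure Ω)) (hdiv : IntegrableOn (divergence V) Ω μ) :
    ∫ x in Ω, boundaryCutoff ε (η x) * divergence V x ∂μ =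
      -∫ x in Ω, deriv (boundaryCutoff ε) (η x) * ⟪∇ η x, V x⟫ ∂μ :=
  setIntegral_comp_mul_divergence hΩ hb (h.contDiff.of_le one_le_two) h.eq_zero
    (contDiff_boundaryCutoff ε) (half_pos hε) (fun _ hr => boundaryCutoff_of_le_half hε hr)
    hV hVc hdiv

theorem exists_setIntegral_deriv_boundaryCutoff_le (h : IsDefiningFunction η Ω) (hΩ : IsOpen Ω)
    (hb : Bornology.IsBounded Ω) :
    ∃ B : ℝ, ∀ᶠ ε in 𝓝[>] 0, ∫ x in Ω, deriv (boundaryCutoff ε) (η x) ∂μ ≤ B := by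
  have hη := h.isC2On (closure Ω)
  obtain ⟨c, hc, ε₀, hε₀, hcη⟩ := h.exists_lt_normSq_gradient hΩ hb
  have integrable_laplacian : IntegrableOn (Δ η) Ω μ :=
    integrableOn_of_continuousOn_closure hb hη.continuousOn_laplacian
  refine ⟨(∫ x in Ω, ‖Δ η x‖ ∂μ) / c, ?_⟩
  filter_upwards [Ioo_mem_nhdsGT hε₀] with ε ⟨hε, hεε₀⟩
  rw [le_div_iff₀ hc]
  calc (∫ x in Ω, deriv (boundaryCutoff ε) (η x) ∂μ) * c
      = ∫ x in Ω, deriv (boundaryCutoff ε) (η x) * c ∂μ := (integral_mul_const _ _).symm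
    _ ≤ ∫ x in Ω, deriv (boundaryCutoff ε) (η x) * ⟪∇ η x, ∇ η x⟫ ∂μ := by
        refine h.setIntegral_deriv_boundaryCutoff_mul_mono hΩ hb hε continuousOn_const
          (hη.continuousOn_gradient.inner hη.continuousOn_gradient) fun x hx hxε => ?_
        rw [real_inner_self_eq_norm_sq]
        exact (hcη x hx (hxε.trans_lt hεε₀)).le
    _ = -∫ x in Ω, boundaryCutoff ε (η x) * Δ η x ∂μ := by
        have := h.setIntegral_boundaryCutoff_mul_divergence (μ := μ) hΩ hb hε
          ((h.isC2On Ω).contDiffOn_one_gradient hΩ) hη.continuousOn_gradient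
          (by simpa only [funext (divergence_gradient η)] using integrable_laplacian)
        simp only [divergence_gradient] at this
        rw [this, neg_neg]
    _ ≤ ∫ x in Ω, ‖Δ η x‖ ∂μ := by
        refine (neg_le_abs _).trans ((Real.norm_eq_abs _).symm.trans_le
          (norm_integral_le_of_norm_le integrable_laplacian.norm (.of_forall fun x => ?_)))
        rw [norm_mul]
        exact mul_le_of_le_one_left (norm_nonneg _) (abs_boundaryCutoff_le_one ε _)

-- The boundary term `-∫ h_ε'(η) ⟪∇ η, V⟫` of the cut-off identity is at least `-δ ∫ h_ε'(η)`,
-- and `∫ h_ε'(η)` stays bounded, so no surface measure is needed.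
theorem setIntegral_divergence_nonneg (h : IsDefiningFunction η Ω) (hΩ : IsOpen Ω)
    (hb : Bornology.IsBounded Ω) (hV : ContDiffOn ℝ 1 V Ω) (hVc : ContinuousOn V (closure Ω))
    (hdiv : IntegrableOn (divergence V) Ω μ) (hbd : ∀ x ∈ frontier Ω, ⟪∇ η x, V x⟫ ≤ 0) :
    0 ≤ ∫ x in Ω, divergence V x ∂μ := by
  have continuousOn_inner : ContinuousOn (fun x => ⟪∇ η x, V x⟫) (closure Ω) :=
    (h.isC2On _).continuousOn_gradient.inner hVc
  obtain ⟨B, hB⟩ := h.exists_setIntegral_deriv_boundaryCutoff_le (μ := μ) hΩ hb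
  have neg_mul_le : ∀ δ > 0, -(B * δ) ≤ ∫ x in Ω, divergence V x ∂μ := fun δ hδ => by
    obtain ⟨ε₀, hε₀, hδε⟩ := h.exists_forall_lt hΩ hb continuousOn_inner
      fun x hx => (hbd x hx).trans_lt hδ
    refine ge_of_tendsto
      (tendsto_setIntegral_boundaryCutoff_mul hΩ.measurableSet h.contDiff.continuous h.pos hdiv) ?_
    filter_upwards [Ioo_mem_nhdsGT hε₀, hB] with ε ⟨hε, hεε₀⟩ hBε
    rw [h.setIntegral_boundaryCutoff_mul_divergence hΩ hb hε hV hVc hdiv, neg_le_neg_iff]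
    calc ∫ x in Ω, deriv (boundaryCutoff ε) (η x) * ⟪∇ η x, V x⟫ ∂μ
        ≤ ∫ x in Ω, deriv (boundaryCutoff ε) (η x) * δ ∂μ :=
          h.setIntegral_deriv_boundaryCutoff_mul_mono hΩ hb hε continuousOn_inner
            continuousOn_const fun x hx hxε => (hδε x hx (hxε.trans_lt hεε₀)).le
      _ = (∫ x in Ω, deriv (boundaryCutoff ε) (η x) ∂μ) * δ := integral_mul_const _ _
      _ ≤ B * δ := mul_le_mul_of_nonneg_right hBε hδ.le
  have tendsto_neg_mul : Tendsto (fun δ : ℝ => -(B * δ)) (𝓝[>] 0) (𝓝 0) :=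
    tendsto_nhdsWithin_of_tendsto_nhds (Continuous.tendsto' (by fun_prop) 0 0 (by simp))
  exact le_of_tendsto tendsto_neg_mul (eventually_mem_nhdsWithin.mono neg_mul_le)

theorem setIntegral_green_nonneg {u v : E → ℝ} (h : IsDefiningFunction η Ω) (hΩ : IsOpen Ω)
    (hb : Bornology.IsBounded Ω) (hu : IsC2On u (closure Ω)) (hv : IsC2On v (closure Ω))
    (hbd : ∀ x ∈ frontier Ω, ⟪∇ η x, u x • ∇ v x - v x • ∇ u x⟫ ≤ 0) :
    0 ≤ ∫ x in Ω, (u x * Δ v x - v x * Δ u x) ∂μ := by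
  have divergence_eq : EqOn (divergence fun x => u x • ∇ v x - v x • ∇ u x)
      (fun x => u x * Δ v x - v x * Δ u x) (closure Ω) := fun x hx =>
    divergence_smul_gradient_sub (hu.differentiableAt x hx) (hu.differentiableAt_fderiv x hx)
      (hv.differentiableAt x hx) (hv.differentiableAt_fderiv x hx)
  have eqOn_Ω := divergence_eq.mono subset_closure
  rw [← setIntegral_congr_fun hΩ.measurableSet eqOn_Ω]
  have hu' := hu.mono subset_closure
  have hv' := hv.mono subset_closure
  refine h.setIntegral_divergence_nonneg hΩ hb
    (((hu'.contDiffOn_one hΩ).smul (hv'.contDiffOn_one_gradient hΩ)).sub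
      ((hv'.contDiffOn_one hΩ).smul (hu'.contDiffOn_one_gradient hΩ)))
    ((hu.continuousOn.smul hv.continuousOn_gradient).sub
      (hv.continuousOn.smul hu.continuousOn_gradient))
    (integrableOn_of_continuousOn_closure hb ?_) hbd
  exact ((hu.continuousOn.mul hv.continuousOn_laplacian).sub
    (hv.continuousOn.mul hu.continuousOn_laplacian)).congr divergence_eq

end IsDefiningFunction

end DivergenceInequality

section TimeIntegration

theorem integrableOn_setIntegral_of_continuousOn {X Y : Type*} [TopologicalSpace X]
    [SecondCountableTopology X] [MeasurableSpace X] [OpensMeasurableSpace X] [TopologicalSpace Y]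
    [MeasurableSpace Y] [OpensMeasurableSpace Y] {μ : Measure X}
    {ν : Measure Y} [SFinite μ] [SFinite ν] {s : Set X} {I : Set Y} {f : Y × X → ℝ} {K : ℝ}
    (hs : MeasurableSet s) (hμs : μ s < ⊤) (hI : MeasurableSet I) (hνI : ν I < ⊤)
    (hf : ContinuousOn f (I ×ˢ s)) (hK : ∀ p ∈ I ×ˢ s, ‖f p‖ ≤ K) :
    IntegrableOn (fun t => ∫ x in s, f (t, x) ∂μ) I ν := by
  have integrableOn_prod : IntegrableOn f (I ×ˢ s) (ν.prod μ) :=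
    .of_bound (by rw [Measure.prod_prod]; exact ENNReal.mul_lt_top hνI hμs)
      (hf.aestronglyMeasurable (hI.prod hs)) K
      ((ae_restrict_iff' (hI.prod hs)).2 (.of_forall hK))
  rw [IntegrableOn, ← Measure.prod_restrict] at integrableOn_prod
  exact integrableOn_prod.integral_prod_left

theorem hasDerivAt_setIntegral_of_continuousOn {X : Type*} [PseudoMetricSpace X] [ProperSpace X]
    [MeasurableSpace X] [OpensMeasurableSpace X] {μ : Measure X} [IsFiniteMeasureOnCompacts μ]
    {Ω : Set X} {I : Set ℝ} {f f' : ℝ × X → ℝ} {t : ℝ} (hΩ : MeasurableSet Ω)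
    (hb : Bornology.IsBounded Ω) (hI : IsOpen I) (hf : ContinuousOn f (I ×ˢ closure Ω))
    (hf' : ContinuousOn f' (I ×ˢ closure Ω))
    (hderiv : ∀ p ∈ I ×ˢ Ω, HasDerivAt (fun τ => f (τ, p.2)) (f' p) p.1) (ht : t ∈ I) :
    HasDerivAt (fun τ => ∫ x in Ω, f (τ, x) ∂μ) (∫ x in Ω, f' (t, x) ∂μ) t := by
  have integrableOn_slice {g : ℝ × X → ℝ} (hg : ContinuousOn g (I ×ˢ closure Ω)) {τ : ℝ}
      (hτ : τ ∈ I) : IntegrableOn (fun x => g (τ, x)) Ω μ :=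
    integrableOn_of_continuousOn_closure hb
      (hg.comp (by fun_prop) fun x hx => ⟨hτ, hx⟩)
  obtain ⟨J, hJt, hJI, hJ⟩ := local_compact_nhds (hI.mem_nhds ht)
  obtain ⟨K, hK⟩ := (hJ.prod hb.isCompact_closure).exists_bound_of_continuousOn
    (hf'.mono (prod_mono hJI subset_rfl))
  refine (hasDerivAt_integral_of_dominated_loc_of_deriv_le (F' := fun τ x => f' (τ, x))
    (bound := fun _ => K) hJt
    ((hI.eventually_mem ht).mono fun τ hτ => (integrableOn_slice hf hτ).aestronglyMeasurable)
    (integrableOn_slice hf ht) (integrableOn_slice hf' ht).aestronglyMeasurable ?_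
    (integrableOn_const hb.measure_lt_top.ne) ?_).2
  · exact (ae_restrict_iff' hΩ).2 (.of_forall fun x hx τ hτ =>
      hK (τ, x) ⟨hτ, subset_closure hx⟩)
  · exact (ae_restrict_iff' hΩ).2 (.of_forall fun x hx τ hτ => hderiv (τ, x) ⟨hJI hτ, hx⟩)

theorem sub_le_setIntegral_Ioo_of_hasDerivAt_of_le {a b Fa Fb : ℝ} {F F' W : ℝ → ℝ} (hab : a < b)
    (hF : ∀ t ∈ Ioo a b, HasDerivAt F (F' t) t) (ha : Tendsto F (𝓝[>] a) (𝓝 Fa))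
    (hb : Tendsto F (𝓝[<] b) (𝓝 Fb)) (hW : IntegrableOn W (Ioo a b))
    (hFW : ∀ t ∈ Ioo a b, F' t ≤ W t) : Fb - Fa ≤ ∫ t in Ioo a b, W t := by
  let G := extendFrom (Ioo a b) F
  have G_eventuallyEq : ∀ t ∈ Ioo a b, G =ᶠ[𝓝 t] F := fun t ht =>
    (isOpen_Ioo.eventually_mem ht).mono fun y hy =>
      extendFrom_eq (subset_closure hy)
        ((hF y hy).continuousAt.tendsto.mono_left nhdsWithin_le_nhds)
  have continuousOn_G : ContinuousOn G (Icc a b) :=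
    continuousOn_Icc_extendFrom_Ioo
      (fun t ht => (hF t ht).continuousAt.continuousWithinAt) ha hb
  rw [← eq_lim_at_left_extendFrom_Ioo hab ha, ← eq_lim_at_right_extendFrom_Ioo hab hb,
    ← integral_Ioc_eq_integral_Ioo, ← intervalIntegral.integral_of_le hab.le]
  exact intervalIntegral.sub_le_integral_of_hasDeriv_right_of_le hab.le continuousOn_G
    (fun t ht => ((hF t ht).congr_of_eventuallyEq (G_eventuallyEq t ht)).hasDerivWithinAt)
    ((integrableOn_Icc_iff_integrableOn_Ioo (by simp) (by simp)).2 hW) hFW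

end TimeIntegration

section Localization

variable {X : Type*} [MeasurableSpace X] {μ : Measure X} {Ω ω : Set X} {G w : X → ℝ} {c : ℝ}

theorem half_mul_sub_le_setIntegral_mul (hΩ : MeasurableSet Ω) (hω : MeasurableSet ω)
    (hωΩ : ω ⊆ Ω) (hG : ∀ x ∈ Ω, 0 ≤ G x) (hc : ∀ x ∈ Ω \ ω, c ≤ G x) (hw : ∀ x ∈ Ω, 0 ≤ w x)
    (hwi : IntegrableOn w Ω μ) (hGw : IntegrableOn (fun x => (G x - c / 2) * w x) Ω μ) :
    c / 2 * ((∫ x in Ω, w x ∂μ) - 2 * ∫ x in ω, w x ∂μ) ≤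
      ∫ x in Ω, (G x - c / 2) * w x ∂μ := by
  have hwω : IntegrableOn (ω.indicator w) Ω μ := hwi.indicator hω
  have setIntegral_ω : ∫ x in ω, w x ∂μ = ∫ x in Ω, ω.indicator w x ∂μ := by
    rw [setIntegral_indicator hω, inter_eq_self_of_subset_right hωΩ]
  rw [setIntegral_ω, ← integral_const_mul 2, ← integral_sub hwi (hwω.const_mul 2),
    ← integral_const_mul]
  refine setIntegral_mono_on ((hwi.sub (hwω.const_mul 2)).const_mul _) hGw hΩ fun x hx => ?_
  by_cases hxω : x ∈ ω
  · rw [indicator_of_mem hxω]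
    linarith [mul_nonneg (hG x hx) (hw x hx)]
  · rw [indicator_of_notMem hxω]
    linarith [mul_le_mul_of_nonneg_right (hc x ⟨hx, hxω⟩) (hw x hx)]

end Localization

section EssentialSupremum

variable {X : Type*} [TopologicalSpace X] [MeasurableSpace X] {μ : Measure X}
  [μ.IsOpenPosMeasure] {U : Set X} {f g : X → ℝ}

theorem forall_mem_le_of_ae_restrict_le (hU : IsOpen U) (hf : ContinuousOn f U)
    (hg : ContinuousOn g U) (hfg : f ≤ᵐ[μ.restrict U] g) : ∀ x ∈ U, f x ≤ g x := by
  have sup_eq : f ⊔ g =ᵐ[μ.restrict U] g := hfg.mono fun x hx => sup_eq_right.2 hx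
  exact fun x hx => sup_eq_right.1 (Measure.eqOn_open_of_ae_eq sup_eq hU (hf.sup hg) hg hx)

theorem mul_le_eLpNorm_top_mul [OpensMeasurableSpace X] {a : X → ℝ} (hU : IsOpen U)
    (ha : MemLp a ⊤ (μ.restrict U)) (hg : ContinuousOn g U) (hg0 : ∀ x ∈ U, 0 ≤ g x)
    (hag : ContinuousOn (fun x => a x * g x) U) :
    ∀ x ∈ U, a x * g x ≤ (eLpNorm a ⊤ (μ.restrict U)).toReal * g x := by
  refine forall_mem_le_of_ae_restrict_le (μ := μ) hU hag (continuousOn_const.mul hg) ?_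
  rw [toReal_eLpNorm ha.aestronglyMeasurable]
  filter_upwards [ae_le_lpNorm_exponent_top ha, ae_restrict_mem hU.measurableSet] with x hax hx
  exact mul_le_mul_of_nonneg_right ((le_abs_self _).trans hax) (hg0 x hx)

end EssentialSupremum

section CarlemanWeights

/-- The Carleman weight `α`, as a function of the time `t` and of the value `r` of `η⁰`. -/
noncomputable def carlemanAlpha (T M lam t r : ℝ) : ℝ :=
  (exp (2 * lam * M) - exp (lam * r)) / (t * (T - t))

/-- The Carleman weight `ξ`, as a function of the time `t` and of the value `r` of `η⁰`. -/
noncomputable def carlemanXi (T lam t r : ℝ) : ℝ := exp (lam * r) / (t * (T - t))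

/-- The exponential weight `e ^ (-s α)`. -/
noncomputable def carlemanWeight (T M lam s t r : ℝ) : ℝ := exp (-s * carlemanAlpha T M lam t r)

/-- The time derivative of `carlemanWeight`. -/
noncomputable def carlemanWeightDeriv (T M lam s t r : ℝ) : ℝ :=
  carlemanWeight T M lam s t r *
    (s * (carlemanAlpha T M lam t r * ((T - 2 * t) / (t * (T - t)))))

variable {T M lam s t r A C : ℝ}

theorem mul_sub_pos_of_mem_Ioo (ht : t ∈ Ioo 0 T) : 0 < t * (T - t) :=
  mul_pos ht.1 (sub_pos.2 ht.2)

theorem mul_sub_ne_zero_of_mem_prod {X : Type*} {S : Set X} {p : ℝ × X}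
    (hp : p ∈ Ioo 0 T ×ˢ S) : p.1 * (T - p.1) ≠ 0 :=
  (mul_sub_pos_of_mem_Ioo hp.1).ne'

theorem carlemanXi_pos (ht : t ∈ Ioo 0 T) : 0 < carlemanXi T lam t r :=
  div_pos (exp_pos _) (mul_sub_pos_of_mem_Ioo ht)

theorem carlemanWeight_pos (T M lam s t r : ℝ) : 0 < carlemanWeight T M lam s t r := exp_pos _

section Derivatives

theorem hasDerivAt_exp_const_mul (lam r : ℝ) :
    HasDerivAt (fun r => exp (lam * r)) (exp (lam * r) * lam) r := by
  simpa only [mul_one, id] using! ((hasDerivAt_id r).const_mul lam).exp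

theorem hasDerivAt_carlemanAlpha (T M lam t r : ℝ) :
    HasDerivAt (carlemanAlpha T M lam t) (-(lam * carlemanXi T lam t r)) r := by
  refine (((hasDerivAt_exp_const_mul lam r).const_sub _).div_const _).congr_deriv ?_
  rw [carlemanXi]
  ring

theorem hasDerivAt_carlemanXi (T lam t r : ℝ) :
    HasDerivAt (carlemanXi T lam t) (lam * carlemanXi T lam t r) r := by
  refine ((hasDerivAt_exp_const_mul lam r).div_const _).congr_deriv ?_
  rw [carlemanXi]
  ring

theorem hasDerivAt_carlemanWeight (T M lam s t r : ℝ) :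
    HasDerivAt (carlemanWeight T M lam s t)
      (carlemanWeight T M lam s t r * (s * lam * carlemanXi T lam t r)) r := by
  refine ((hasDerivAt_carlemanAlpha T M lam t r).const_mul (-s)).exp.congr_deriv ?_
  rw [carlemanWeight]
  ring

theorem hasDerivAt_carlemanWeight_mul_carlemanXi (T M lam s t r : ℝ) :
    HasDerivAt (fun r => carlemanWeight T M lam s t r * (s * lam * carlemanXi T lam t r))
      (carlemanWeight T M lam s t r *
        ((s * lam * carlemanXi T lam t r) ^ 2 + s * lam ^ 2 * carlemanXi T lam t r)) r := by
  refine ((hasDerivAt_carlemanWeight T M lam s t r).mul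
    ((hasDerivAt_carlemanXi T lam t r).const_mul (s * lam))).congr_deriv ?_
  ring

theorem hasDerivAt_carlemanWeight_time (ht : t ∈ Ioo 0 T) (M lam s r : ℝ) :
    HasDerivAt (fun t => carlemanWeight T M lam s t r)
      (carlemanWeightDeriv T M lam s t r) t := by
  have hτ := (mul_sub_pos_of_mem_Ioo ht).ne'
  have hasDerivAt_τ : HasDerivAt (fun t => t * (T - t)) (1 * (T - t) + t * -1) t :=
    (hasDerivAt_id t).mul ((hasDerivAt_id t).const_sub T)
  refine (((hasDerivAt_const t (exp (2 * lam * M) - exp (lam * r))).div hasDerivAt_τ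
    hτ).const_mul (-s)).exp.congr_deriv ?_
  simp only [Pi.div_apply, carlemanWeightDeriv, carlemanWeight, carlemanAlpha]
  field_simp
  ring

theorem isC2On_carlemanWeight_comp {E : Type*} [NormedAddCommGroup E] [NormedSpace ℝ E]
    {η : E → ℝ} (hη : ContDiff ℝ 2 η) (T M lam s t : ℝ) (S : Set E) :
    IsC2On (carlemanWeight T M lam s t ∘ η) S := by
  refine isC2On_of_contDiff (ContDiff.comp ?_ hη) S
  unfold carlemanWeight carlemanAlpha
  fun_prop

variable {E : Type*} [NormedAddCommGroup E] [InnerProductSpace ℝ E] [FiniteDimensional ℝ E]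
  {η : E → ℝ}

theorem gradient_carlemanWeight_comp {x : E} (hη : DifferentiableAt ℝ η x) (T M lam s t : ℝ) :
    ∇ (carlemanWeight T M lam s t ∘ η) x =
      (carlemanWeight T M lam s t (η x) * (s * lam * carlemanXi T lam t (η x))) • ∇ η x :=
  gradient_comp (hasDerivAt_carlemanWeight T M lam s t (η x)) hη

theorem laplacian_carlemanWeight_comp (hη : ContDiff ℝ 2 η) (T M lam s t : ℝ) (x : E) :
    Δ (carlemanWeight T M lam s t ∘ η) x = carlemanWeight T M lam s t (η x) *
      (((s * lam * carlemanXi T lam t (η x)) ^ 2 + s * lam ^ 2 * carlemanXi T lam t (η x)) *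
        ‖∇ η x‖ ^ 2 + s * lam * carlemanXi T lam t (η x) * Δ η x) := by
  rw [laplacian_comp (hasDerivAt_carlemanWeight T M lam s t)
    (hasDerivAt_carlemanWeight_mul_carlemanXi T M lam s t (η x)) (hη.differentiable two_ne_zero)
    ((isC2On_of_contDiff hη univ).differentiableAt_fderiv x (mem_univ x))]
  ring

end Derivatives

section Continuity

variable {X : Type*} [TopologicalSpace X] {η : X → ℝ}

theorem continuousOn_carlemanAlpha (hη : Continuous η) (T M lam : ℝ) (S : Set X) :
    ContinuousOn (fun p : ℝ × X => carlemanAlpha T M lam p.1 (η p.2)) (Ioo 0 T ×ˢ S) :=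
  ContinuousOn.div (by fun_prop) (by fun_prop) fun _ => mul_sub_ne_zero_of_mem_prod

theorem continuousOn_carlemanXi (hη : Continuous η) (T lam : ℝ) (S : Set X) :
    ContinuousOn (fun p : ℝ × X => carlemanXi T lam p.1 (η p.2)) (Ioo 0 T ×ˢ S) :=
  ContinuousOn.div (by fun_prop) (by fun_prop) fun _ => mul_sub_ne_zero_of_mem_prod

theorem continuousOn_carlemanWeight (hη : Continuous η) (T M lam s : ℝ) (S : Set X) :
    ContinuousOn (fun p : ℝ × X => carlemanWeight T M lam s p.1 (η p.2)) (Ioo 0 T ×ˢ S) :=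
  (continuousOn_const.mul (continuousOn_carlemanAlpha hη T M lam S)).rexp

theorem continuousOn_carlemanWeightDeriv (hη : Continuous η) (T M lam s : ℝ) (S : Set X) :
    ContinuousOn (fun p : ℝ × X => carlemanWeightDeriv T M lam s p.1 (η p.2)) (Ioo 0 T ×ˢ S) :=
  (continuousOn_carlemanWeight hη T M lam s S).mul <| continuousOn_const.mul <|
    (continuousOn_carlemanAlpha hη T M lam S).mul <|
      ContinuousOn.div (by fun_prop) (by fun_prop) fun _ => mul_sub_ne_zero_of_mem_prod

end Continuity

section Bounds

theorem exp_neg_div_le {b τ : ℝ} (hb : 0 < b) (hτ : 0 < τ) (n : ℕ) :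
    exp (-(b / τ)) ≤ n.factorial / b ^ n * τ ^ n := by
  have := pow_div_factorial_le_exp _ (div_pos hb hτ).le n
  rw [exp_neg, inv_le_comm₀ (exp_pos _) (by positivity)]
  refine le_trans (le_of_eq ?_) this
  rw [div_pow]
  field_simp

theorem exists_carlemanWeight_le (hM : 0 < M) (hlam : 0 < lam) (hs : 0 < s) (T : ℝ) (n : ℕ) :
    ∃ K > 0, ∀ t ∈ Ioo 0 T, ∀ r ≤ M, carlemanWeight T M lam s t r ≤ K * (t * (T - t)) ^ n := by
  have exp_lt : exp (lam * M) < exp (2 * lam * M) := exp_lt_exp.2 (by nlinarith [mul_pos hlam hM])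
  have hb : 0 < s * (exp (2 * lam * M) - exp (lam * M)) := mul_pos hs (sub_pos.2 exp_lt)
  refine ⟨_, by positivity, fun t ht r hr =>
    (exp_le_exp.2 ?_).trans (exp_neg_div_le hb (mul_sub_pos_of_mem_Ioo ht) n)⟩
  rw [carlemanAlpha, neg_mul, neg_le_neg_iff, mul_div_assoc]
  have := (mul_sub_pos_of_mem_Ioo ht).le
  gcongr

theorem exists_carlemanWeight_mul_sq_le (hM : 0 < M) (hlam : 0 < lam) (hs : 0 < s) (T : ℝ) :
    ∃ K > 0, ∀ t ∈ Ioo 0 T, ∀ r ≤ M,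
      carlemanWeight T M lam s t r * carlemanXi T lam t r ^ 2 ≤ K := by
  obtain ⟨K, hK, hWK⟩ := exists_carlemanWeight_le hM hlam hs T 2
  refine ⟨K * exp (lam * M) ^ 2, by positivity, fun t ht r hr => ?_⟩
  have hτ := mul_sub_pos_of_mem_Ioo ht
  calc carlemanWeight T M lam s t r * carlemanXi T lam t r ^ 2
      ≤ K * (t * (T - t)) ^ 2 * (exp (lam * r) / (t * (T - t))) ^ 2 :=
        mul_le_mul_of_nonneg_right (hWK t ht r hr) (sq_nonneg _)
    _ = K * exp (lam * r) ^ 2 := by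
        generalize t * (T - t) = τ at hτ
        field_simp
    _ ≤ K * exp (lam * M) ^ 2 := by gcongr

theorem inv_le_carlemanXi (hlam : 0 ≤ lam) (hr : 0 ≤ r) (ht : t ∈ Ioo 0 T) :
    1 / (t * (T - t)) ≤ carlemanXi T lam t r :=
  div_le_div_of_nonneg_right (one_le_exp (mul_nonneg hlam hr)) (mul_sub_pos_of_mem_Ioo ht).le

theorem one_le_sq_mul_carlemanXi (hlam : 0 ≤ lam) (hr : 0 ≤ r) (ht : t ∈ Ioo 0 T) :
    1 ≤ T ^ 2 * carlemanXi T lam t r := by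
  have hτ := mul_sub_pos_of_mem_Ioo ht
  have hτT : t * (T - t) ≤ T ^ 2 := by nlinarith [ht.1, ht.2]
  calc (1 : ℝ) ≤ T ^ 2 * (1 / (t * (T - t))) := by rwa [mul_one_div, one_le_div hτ]
    _ ≤ T ^ 2 * carlemanXi T lam t r := by gcongr; exact inv_le_carlemanXi hlam hr ht

theorem le_mul_carlemanXi {K : ℝ} (hlam : 0 ≤ lam) (hr : 0 ≤ r) (ht : t ∈ Ioo 0 T) (hK : 0 ≤ K)
    (hs : K * T ^ 2 ≤ s) : K ≤ s * carlemanXi T lam t r :=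
  calc K ≤ K * (T ^ 2 * carlemanXi T lam t r) :=
        le_mul_of_one_le_right hK (one_le_sq_mul_carlemanXi hlam hr ht)
    _ = K * T ^ 2 * carlemanXi T lam t r := (mul_assoc _ _ _).symm
    _ ≤ s * carlemanXi T lam t r := mul_le_mul_of_nonneg_right hs (carlemanXi_pos ht).le

theorem mul_le_sq_mul_carlemanXi (hlam : 0 ≤ lam) (hr : 0 ≤ r) (ht : t ∈ Ioo 0 T) (hC : 1 ≤ C)
    (hA : 0 ≤ A) (hs : C * √A * T ^ 2 ≤ s) : C * A ≤ (s * carlemanXi T lam t r) ^ 2 :=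
  calc C * A ≤ C ^ 2 * A := by gcongr; exact le_self_pow₀ hC two_ne_zero
    _ = (C * √A) ^ 2 := by rw [mul_pow, sq_sqrt hA]
    _ ≤ (s * carlemanXi T lam t r) ^ 2 :=
      pow_le_pow_left₀ (by positivity) (le_mul_carlemanXi hlam hr ht (by positivity) hs) 2

theorem abs_carlemanAlpha_le (hM : 0 ≤ M) (hlam : 0 ≤ lam) (hr : r ∈ Icc 0 M)
    (ht : t ∈ Ioo 0 T) :
    |carlemanAlpha T M lam t r| ≤ exp (2 * lam * M) * carlemanXi T lam t r := by
  have hτ := mul_sub_pos_of_mem_Ioo ht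
  have exp_le : exp (lam * r) ≤ exp (2 * lam * M) := exp_le_exp.2 <| by
    nlinarith [mul_le_mul_of_nonneg_left hr.2 hlam, mul_nonneg hlam hM]
  rw [carlemanAlpha, abs_div, abs_of_pos hτ, abs_of_nonneg (sub_nonneg.2 exp_le), carlemanXi,
    mul_div_assoc']
  gcongr
  nlinarith [one_le_exp (mul_nonneg hlam hr.1), exp_pos (lam * r), exp_pos (2 * lam * M)]

theorem mul_carlemanAlpha_mul_le (hM : 0 ≤ M) (hlam : 0 ≤ lam) (hr : r ∈ Icc 0 M)
    (ht : t ∈ Ioo 0 T) (hC : 0 ≤ C) (hs0 : 0 ≤ s) (hs : C * exp (2 * lam * M) * T ≤ s) :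
    C * (s * (carlemanAlpha T M lam t r * ((T - 2 * t) / (t * (T - t))))) ≤
      (s * carlemanXi T lam t r) ^ 2 := by
  have hξ : 0 ≤ carlemanXi T lam t r := (carlemanXi_pos ht).le
  have abs_le : |(T - 2 * t) / (t * (T - t))| ≤ T * carlemanXi T lam t r := by
    rw [abs_div, abs_of_pos (mul_sub_pos_of_mem_Ioo ht), ← mul_one_div]
    have : |T - 2 * t| ≤ T := abs_le.2 ⟨by linarith [ht.2], by linarith [ht.1]⟩
    exact mul_le_mul this (inv_le_carlemanXi hlam hr.1 ht)
      (one_div_pos.2 (mul_sub_pos_of_mem_Ioo ht)).le (ht.1.trans ht.2).le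
  calc C * (s * (carlemanAlpha T M lam t r * ((T - 2 * t) / (t * (T - t)))))
      ≤ C * (s * (exp (2 * lam * M) * carlemanXi T lam t r * (T * carlemanXi T lam t r))) := by
        refine mul_le_mul_of_nonneg_left (mul_le_mul_of_nonneg_left ?_ hs0) hC
        refine (le_abs_self _).trans ?_
        rw [abs_mul]
        gcongr
        exact abs_carlemanAlpha_le hM hlam hr ht
    _ = s * (C * exp (2 * lam * M) * T) * carlemanXi T lam t r ^ 2 := by ring
    _ ≤ s * s * carlemanXi T lam t r ^ 2 := by gcongr
    _ = (s * carlemanXi T lam t r) ^ 2 := by ring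

theorem add_sub_mul_le_sq_mul_half {c D L l Y : ℝ} (hC : 0 < C) (hCY : C ≤ Y)
    (hA : C * A ≤ Y ^ 2) (hD : C * D ≤ Y ^ 2) (hl : |l| ≤ L) (hcC : 2 * (2 + L) ≤ c * C) :
    A + D - Y * l ≤ Y ^ 2 * (c / 2) := by
  have hY : 0 ≤ Y := hC.le.trans hCY
  have hL : 0 ≤ L := (abs_nonneg l).trans hl
  have first_order : C * -(Y * l) ≤ Y ^ 2 * L :=
    calc C * -(Y * l) = C * (Y * -l) := by ring
      _ ≤ C * (Y * L) := by gcongr; exact (neg_le_abs l).trans hl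
      _ ≤ Y * (Y * L) := by gcongr
      _ = Y ^ 2 * L := by ring
  refine le_of_mul_le_mul_left ?_ hC
  linarith [mul_le_mul_of_nonneg_left hcC (sq_nonneg Y)]

theorem carleman_threshold_le {X : ℝ} (hM : 0 ≤ M) (hlam : 0 ≤ lam) (hC : 0 ≤ C) (hT : 0 ≤ T)
    (hs : C * exp (4 * lam * M) * (T + T ^ 2 + T ^ 2 * √A) ≤ s)
    (hX : X ≤ exp (2 * lam * M) * (T + T ^ 2 + T ^ 2 * √A)) : C * X ≤ s := by
  have exp_le : exp (2 * lam * M) ≤ exp (4 * lam * M) := exp_le_exp.2 <| by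
    linarith [mul_nonneg hlam hM]
  refine le_trans ?_ hs
  rw [mul_assoc]
  gcongr
  exact hX.trans (by gcongr)

-- With `E = exp (2 λ M)`, the three parts `E T`, `T²`, `T² √A` of the threshold absorb `∂ₜα`,
-- `Δη` and the potential, respectively.
theorem carleman_bracket_le {c L G l : ℝ} (hM : 0 ≤ M) (hlam : 1 ≤ lam) (hr : r ∈ Icc 0 M)
    (ht : t ∈ Ioo 0 T) (hA : 0 ≤ A) (hG : 0 ≤ G) (hl : |l| ≤ L) (hC : 1 ≤ C)
    (hcC : 2 * (2 + L) ≤ c * C)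
    (hs : C * exp (4 * lam * M) * (T + T ^ 2 + T ^ 2 * √A) ≤ s) :
    A + s * (carlemanAlpha T M lam t r * ((T - 2 * t) / (t * (T - t)))) -
        (((s * lam * carlemanXi T lam t r) ^ 2 + s * lam ^ 2 * carlemanXi T lam t r) * G +
          s * lam * carlemanXi T lam t r * l) ≤
      -((s * lam * carlemanXi T lam t r) ^ 2 * (G - c / 2)) := by
  have hlam0 : 0 ≤ lam := zero_le_one.trans hlam
  have hC0 : 0 < C := zero_lt_one.trans_le hC
  have hT : 0 ≤ T := (ht.1.trans ht.2).le
  have one_le_E : 1 ≤ exp (2 * lam * M) := one_le_exp (by positivity)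
  have le_E_mul {X Y : ℝ} (hY : 0 ≤ Y) (hXY : X ≤ Y) : X ≤ exp (2 * lam * M) * Y :=
    hXY.trans (le_mul_of_one_le_left hY one_le_E)
  have hTA : 0 ≤ T ^ 2 * √A := by positivity
  have hs_time : C * (exp (2 * lam * M) * T) ≤ s :=
    carleman_threshold_le hM hlam0 hC0.le hT hs (by gcongr; nlinarith)
  have hs_laplacian : C * T ^ 2 ≤ s :=
    carleman_threshold_le hM hlam0 hC0.le hT hs (le_E_mul (by positivity) (by linarith))
  have hs_potential : C * (√A * T ^ 2) ≤ s :=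
    carleman_threshold_le hM hlam0 hC0.le hT hs (le_E_mul (by positivity) (by nlinarith))
  have hs0 : 0 ≤ s := (by positivity : 0 ≤ C * T ^ 2).trans hs_laplacian
  have hξ : 0 ≤ carlemanXi T lam t r := (carlemanXi_pos ht).le
  have sξ_le : s * carlemanXi T lam t r ≤ s * lam * carlemanXi T lam t r := by
    rw [mul_right_comm]
    exact le_mul_of_one_le_right (mul_nonneg hs0 hξ) hlam
  have sξ_sq_le : (s * carlemanXi T lam t r) ^ 2 ≤ (s * lam * carlemanXi T lam t r) ^ 2 :=
    pow_le_pow_left₀ (mul_nonneg hs0 hξ) sξ_le 2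
  have absorbed := add_sub_mul_le_sq_mul_half hC0
    ((le_mul_carlemanXi hlam0 hr.1 ht hC0.le hs_laplacian).trans sξ_le)
    ((mul_le_sq_mul_carlemanXi hlam0 hr.1 ht hC hA (by rwa [mul_assoc])).trans sξ_sq_le)
    ((mul_carlemanAlpha_mul_le hM hlam0 hr ht hC0.le hs0 (by rwa [mul_assoc])).trans sξ_sq_le)
    hl hcC
  have : 0 ≤ s * lam ^ 2 * carlemanXi T lam t r * G := by positivity
  linarith

end Bounds

end CarlemanWeights

section Supersolutions

variable {E : Type*} [NormedAddCommGroup E] [InnerProductSpace ℝ E] [FiniteDimensional ℝ E]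
  {Ω ω : Set E} {η : E → ℝ} {q qt : ℝ × E → ℝ} {T A M lam s t c : ℝ} {x : E}

/-- Nonnegative classical solutions `q` of `∂ₜq + Δq ≤ A q` in `(0, T) × Ω` with `∂q/∂n ≥ 0` on
`(0, T) × ∂Ω`, where `qt` stands for `∂ₜq`. The boundary condition is expressed through `∇η`, which
points into `Ω`. -/
structure IsNeumannSupersolution (η : E → ℝ) (Ω : Set E) (T A : ℝ) (q qt : ℝ × E → ℝ) : Prop where
  continuousOn : ContinuousOn q (Icc 0 T ×ˢ closure Ω)
  nonneg : ∀ p ∈ Icc 0 T ×ˢ closure Ω, 0 ≤ q p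
  hasDerivAt : ∀ p ∈ Ioo 0 T ×ˢ Ω, HasDerivAt (fun t => q (t, p.2)) (qt p) p.1
  continuousOn_deriv : ContinuousOn qt (Ioo 0 T ×ˢ closure Ω)
  isC2On : ∀ t ∈ Ioo 0 T, IsC2On (fun x => q (t, x)) (closure Ω)
  deriv_add_laplacian_le : ∀ t ∈ Ioo 0 T, ∀ x ∈ Ω,
    qt (t, x) + Δ (fun x => q (t, x)) x ≤ A * q (t, x)
  inner_gradient_nonpos : ∀ t ∈ Ioo 0 T, ∀ x ∈ frontier Ω, ⟪∇ η x, ∇ (fun x => q (t, x)) x⟫ ≤ 0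

/-- The integrand `e ^ (-s α) ξ² q` of the Carleman estimate. -/
noncomputable def carlemanDensity (η : E → ℝ) (T M lam s : ℝ) (q : ℝ × E → ℝ) (p : ℝ × E) : ℝ :=
  carlemanWeight T M lam s p.1 (η p.2) * carlemanXi T lam p.1 (η p.2) ^ 2 * q p

/-- The time derivative of the integrand of the weighted energy `∫ e ^ (-s α) q`, where `qt` stands
for `∂ₜq`. -/
noncomputable def carlemanEnergyDeriv (η : E → ℝ) (T M lam s : ℝ) (q qt : ℝ × E → ℝ)
    (p : ℝ × E) : ℝ :=
  carlemanWeightDeriv T M lam s p.1 (η p.2) * q p + carlemanWeight T M lam s p.1 (η p.2) * qt p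

theorem continuousOn_slice {X Y Z : Type*} [TopologicalSpace X] [TopologicalSpace Y]
    [TopologicalSpace Z] {f : Y × X → Z} {I : Set Y} {S : Set X} {t : Y}
    (hf : ContinuousOn f (I ×ˢ S)) (ht : t ∈ I) : ContinuousOn (fun x => f (t, x)) S :=
  hf.comp (by fun_prop) fun _ hx => ⟨ht, hx⟩

/-- The pointwise inequality `(A + ∂ₜ - Δ) e ^ (-s α) ≤ -(s λ)² (‖∇η‖² - c / 2) ξ² e ^ (-s α)` in
`(0, T) × Ω`, which turns Green's formula into an estimate of the weighted energy. -/
def CarlemanWeightInequality (η : E → ℝ) (Ω : Set E) (T A M lam s c : ℝ) : Prop :=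
  ∀ t ∈ Ioo 0 T, ∀ x ∈ Ω,
    A * carlemanWeight T M lam s t (η x) + carlemanWeightDeriv T M lam s t (η x) -
        Δ (carlemanWeight T M lam s t ∘ η) x ≤
      -((s * lam) ^ 2 * ((‖∇ η x‖ ^ 2 - c / 2) *
        (carlemanWeight T M lam s t (η x) * carlemanXi T lam t (η x) ^ 2)))

theorem exists_carlemanWeightInequality (hη : IsDefiningFunction η Ω)
    (hb : Bornology.IsBounded Ω) (hM : 0 ≤ M) (hηM : ∀ x ∈ Ω, η x ≤ M) (hc : 0 < c) :
    ∃ C > 0, ∀ T A lam s : ℝ, 0 ≤ A → 1 ≤ lam →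
      C * exp (4 * lam * M) * (T + T ^ 2 + T ^ 2 * √A) ≤ s →
      CarlemanWeightInequality η Ω T A M lam s c := by
  obtain ⟨L, hL⟩ := hb.isCompact_closure.exists_bound_of_continuousOn
    (hη.isC2On _).continuousOn_laplacian
  have hCL : 0 ≤ 2 * (2 + |L|) / c := by positivity
  have hcC : 2 * (2 + |L|) ≤ c * (1 + 2 * (2 + |L|) / c) := by
    rw [mul_one_add, mul_div_cancel₀ _ hc.ne']
    linarith
  refine ⟨1 + 2 * (2 + |L|) / c, by positivity, fun T A lam s hA hlam hs t ht x hx => ?_⟩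
  have bracket := carleman_bracket_le hM hlam ⟨(hη.pos x hx).le, hηM x hx⟩ ht hA
    (sq_nonneg ‖∇ η x‖) ((hL x (subset_closure hx)).trans (le_abs_self L))
    (le_add_of_nonneg_right hCL) hcC hs
  rw [laplacian_carlemanWeight_comp hη.contDiff, carlemanWeightDeriv]
  linarith [mul_le_mul_of_nonneg_left bracket
    (carlemanWeight_pos T M lam s t (η x)).le]

theorem exists_le_normSq_gradient (hη : ContDiff ℝ 2 η) (hb : Bornology.IsBounded Ω)
    (hgrad : ∀ x ∈ closure (Ω \ ω), ∇ η x ≠ 0) : ∃ c > 0, ∀ x ∈ Ω \ ω, c ≤ ‖∇ η x‖ ^ 2 := by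
  obtain ⟨c, hc, hcη⟩ := (hb.subset sdiff_subset).isCompact_closure.exists_forall_le' (a := 0)
    ((isC2On_of_contDiff hη _).continuousOn_gradient.norm.pow 2)
    fun x hx => pow_pos (norm_pos_iff.2 (hgrad x hx)) 2
  exact ⟨c, hc, fun x hx => hcη x (subset_closure hx)⟩

namespace IsNeumannSupersolution

theorem nonneg_of_mem (h : IsNeumannSupersolution η Ω T A q qt) (ht : t ∈ Ioo 0 T)
    (hx : x ∈ closure Ω) : 0 ≤ q (t, x) :=
  h.nonneg (t, x) ⟨Ioo_subset_Icc_self ht, hx⟩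

theorem continuousOn_Ioo (h : IsNeumannSupersolution η Ω T A q qt) :
    ContinuousOn q (Ioo 0 T ×ˢ closure Ω) :=
  h.continuousOn.mono (prod_mono Ioo_subset_Icc_self subset_rfl)

theorem exists_le (h : IsNeumannSupersolution η Ω T A q qt) (hb : Bornology.IsBounded Ω) :
    ∃ K, ∀ p ∈ Ioo 0 T ×ˢ closure Ω, q p ≤ K := by
  obtain ⟨K, hK⟩ := (isCompact_Icc.prod hb.isCompact_closure).exists_bound_of_continuousOn
    h.continuousOn
  exact ⟨K, fun p hp => (le_abs_self _).trans (hK p ⟨Ioo_subset_Icc_self hp.1, hp.2⟩)⟩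

theorem carlemanDensity_nonneg (h : IsNeumannSupersolution η Ω T A q qt) (ht : t ∈ Ioo 0 T)
    (hx : x ∈ closure Ω) : 0 ≤ carlemanDensity η T M lam s q (t, x) :=
  mul_nonneg (mul_nonneg (carlemanWeight_pos ..).le (sq_nonneg _)) (h.nonneg_of_mem ht hx)

theorem continuousOn_carlemanDensity (h : IsNeumannSupersolution η Ω T A q qt)
    (hη : Continuous η) (M lam s : ℝ) :
    ContinuousOn (carlemanDensity η T M lam s q) (Ioo 0 T ×ˢ closure Ω) :=
  ((continuousOn_carlemanWeight hη T M lam s _).mul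
    ((continuousOn_carlemanXi hη T lam _).pow 2)).mul h.continuousOn_Ioo

theorem continuousOn_carlemanEnergyDeriv (h : IsNeumannSupersolution η Ω T A q qt)
    (hη : Continuous η) (M lam s : ℝ) :
    ContinuousOn (carlemanEnergyDeriv η T M lam s q qt) (Ioo 0 T ×ˢ closure Ω) :=
  ((continuousOn_carlemanWeightDeriv hη T M lam s _).mul h.continuousOn_Ioo).add
    ((continuousOn_carlemanWeight hη T M lam s _).mul h.continuousOn_deriv)

theorem carlemanEnergyDeriv_le (h : IsNeumannSupersolution η Ω T A q qt) (ht : t ∈ Ioo 0 T)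
    (hx : x ∈ Ω) (hW : CarlemanWeightInequality η Ω T A M lam s c) :
    carlemanEnergyDeriv η T M lam s q qt (t, x) ≤
      -((s * lam) ^ 2 * ((‖∇ η x‖ ^ 2 - c / 2) * carlemanDensity η T M lam s q (t, x))) -
      (carlemanWeight T M lam s t (η x) * Δ (fun x => q (t, x)) x -
        q (t, x) * Δ (carlemanWeight T M lam s t ∘ η) x) := by
  rw [carlemanEnergyDeriv, carlemanDensity]
  linarith [mul_le_mul_of_nonneg_right (hW t ht x hx) (h.nonneg_of_mem ht (subset_closure hx)),
    mul_le_mul_of_nonneg_left (h.deriv_add_laplacian_le t ht x hx)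
      (carlemanWeight_pos T M lam s t (η x)).le]

section Measure

variable [MeasurableSpace E] {μ : Measure E} [IsFiniteMeasureOnCompacts μ]

theorem tendsto_setIntegral_carlemanWeight_mul (h : IsNeumannSupersolution η Ω T A q qt)
    (hb : Bornology.IsBounded Ω) (hM : 0 < M) (hηM : ∀ x ∈ Ω, η x ≤ M)
    (hlam : 0 < lam) (hs : 0 < s) {l : Filter ℝ} (hl : ∀ᶠ t in l, t ∈ Ioo 0 T)
    (hl0 : Tendsto (fun t => t * (T - t)) l (𝓝 0)) :
    Tendsto (fun t => ∫ x in Ω, carlemanWeight T M lam s t (η x) * q (t, x) ∂μ) l (𝓝 0) := by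
  obtain ⟨K, -, hWK⟩ := exists_carlemanWeight_le hM hlam hs T 1
  obtain ⟨Q, hQ⟩ := h.exists_le hb
  refine squeeze_zero_norm' (hl.mono fun t ht => norm_setIntegral_le_of_norm_le_const
    (C := K * (t * (T - t)) ^ 1 * Q) hb.measure_lt_top fun x hx => ?_) ?_
  · have hq := h.nonneg_of_mem ht (subset_closure hx)
    rw [norm_of_nonneg (mul_nonneg (carlemanWeight_pos ..).le hq)]
    exact mul_le_mul (hWK t ht _ (hηM x hx)) (hQ (t, x) ⟨ht, subset_closure hx⟩) hq
      ((carlemanWeight_pos ..).le.trans (hWK t ht _ (hηM x hx)))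
  · simpa using! (((hl0.pow 1).const_mul K).mul_const Q).mul_const (μ.real Ω)

variable [BorelSpace E]

theorem hasDerivAt_setIntegral_carlemanWeight_mul (h : IsNeumannSupersolution η Ω T A q qt)
    (hη : Continuous η) (hΩ : MeasurableSet Ω) (hb : Bornology.IsBounded Ω) (ht : t ∈ Ioo 0 T) :
    HasDerivAt (fun t => ∫ x in Ω, carlemanWeight T M lam s t (η x) * q (t, x) ∂μ)
      (∫ x in Ω, carlemanEnergyDeriv η T M lam s q qt (t, x) ∂μ) t :=
  hasDerivAt_setIntegral_of_continuousOn
    (f := fun p => carlemanWeight T M lam s p.1 (η p.2) * q p) hΩ hb isOpen_Ioo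
    ((continuousOn_carlemanWeight hη T M lam s _).mul h.continuousOn_Ioo)
    (h.continuousOn_carlemanEnergyDeriv hη M lam s)
    (fun p hp => (hasDerivAt_carlemanWeight_time hp.1 M lam s (η p.2)).mul (h.hasDerivAt p hp)) ht

theorem integrableOn_setIntegral_carlemanDensity (h : IsNeumannSupersolution η Ω T A q qt)
    (hη : Continuous η) (hb : Bornology.IsBounded Ω) (hM : 0 < M) (hηM : ∀ x ∈ Ω, η x ≤ M)
    (hlam : 0 < lam) (hs : 0 < s) (hω : MeasurableSet ω) (hωΩ : ω ⊆ Ω) :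
    IntegrableOn (fun t => ∫ x in ω, carlemanDensity η T M lam s q (t, x) ∂μ) (Ioo 0 T) := by
  obtain ⟨K, hK, hWK⟩ := exists_carlemanWeight_mul_sq_le hM hlam hs T
  obtain ⟨Q, hQ⟩ := h.exists_le hb
  have hω_closure : ω ⊆ closure Ω := hωΩ.trans subset_closure
  refine integrableOn_setIntegral_of_continuousOn (K := K * Q) hω (hb.subset hωΩ).measure_lt_top
    measurableSet_Ioo measure_Ioo_lt_top
    ((h.continuousOn_carlemanDensity hη M lam s).mono (prod_mono subset_rfl hω_closure))
    fun ⟨t, x⟩ ⟨ht, hx⟩ => ?_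
  rw [norm_of_nonneg (h.carlemanDensity_nonneg ht (hω_closure hx))]
  exact mul_le_mul (hWK t ht _ (hηM x (hωΩ hx))) (hQ (t, x) ⟨ht, hω_closure hx⟩)
    (h.nonneg_of_mem ht (hω_closure hx)) hK.le

end Measure

variable [MeasurableSpace E] [BorelSpace E] {μ : Measure E} [μ.IsAddHaarMeasure]

theorem setIntegral_green_carlemanWeight_nonneg (h : IsNeumannSupersolution η Ω T A q qt)
    (hη : IsDefiningFunction η Ω) (hΩ : IsOpen Ω) (hb : Bornology.IsBounded Ω) (ht : t ∈ Ioo 0 T)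
    (hlam : 0 ≤ lam) (hs : 0 ≤ s) :
    0 ≤ ∫ x in Ω, (carlemanWeight T M lam s t (η x) * Δ (fun x => q (t, x)) x -
      q (t, x) * Δ (carlemanWeight T M lam s t ∘ η) x) ∂μ := by
  refine hη.setIntegral_green_nonneg hΩ hb
    (isC2On_carlemanWeight_comp hη.contDiff T M lam s t _) (h.isC2On t ht) fun x hx => ?_
  have hq : 0 ≤ q (t, x) := h.nonneg_of_mem ht (frontier_subset_closure hx)
  have hW := carlemanWeight_pos T M lam s t (η x)
  have hξ := carlemanXi_pos (lam := lam) (r := η x) ht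
  change ⟪∇ η x, _ • _ - _ • ∇ (carlemanWeight T M lam s t ∘ η) x⟫ ≤ 0
  rw [gradient_carlemanWeight_comp (hη.contDiff.differentiable two_ne_zero x), inner_sub_right,
    real_inner_smul_right, real_inner_smul_right, real_inner_smul_right,
    real_inner_self_eq_norm_sq]
  have flux_q : carlemanWeight T M lam s t (η x) * ⟪∇ η x, ∇ (fun x => q (t, x)) x⟫ ≤ 0 :=
    mul_nonpos_of_nonneg_of_nonpos hW.le (h.inner_gradient_nonpos t ht x hx)
  exact sub_nonpos.2 (flux_q.trans (by positivity))

theorem setIntegral_carlemanEnergyDeriv_le (h : IsNeumannSupersolution η Ω T A q qt)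
    (hη : IsDefiningFunction η Ω) (hΩ : IsOpen Ω) (hb : Bornology.IsBounded Ω)
    (hω : MeasurableSet ω) (hωΩ : ω ⊆ Ω) (hc : ∀ x ∈ Ω \ ω, c ≤ ‖∇ η x‖ ^ 2) (ht : t ∈ Ioo 0 T)
    (hlam : 0 ≤ lam) (hs : 0 ≤ s) (hW : CarlemanWeightInequality η Ω T A M lam s c) :
    ∫ x in Ω, carlemanEnergyDeriv η T M lam s q qt (t, x) ∂μ ≤
      -((s * lam) ^ 2 * (c / 2 * ((∫ x in Ω, carlemanDensity η T M lam s q (t, x) ∂μ) -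
        2 * ∫ x in ω, carlemanDensity η T M lam s q (t, x) ∂μ))) := by
  have hd := continuousOn_slice (h.continuousOn_carlemanDensity hη.contDiff.continuous M lam s) ht
  have hG : ContinuousOn (fun x => ‖∇ η x‖ ^ 2 - c / 2) (closure Ω) :=
    ((hη.isC2On _).continuousOn_gradient.norm.pow 2).sub continuousOn_const
  have hWη := isC2On_carlemanWeight_comp hη.contDiff T M lam s t (closure Ω)
  have hq := h.isC2On t ht
  have integrable_G := integrableOn_of_continuousOn_closure (μ := μ) hb (hG.mul hd)
  have integrable_green := integrableOn_of_continuousOn_closure (μ := μ) hb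
    ((hWη.continuousOn.mul hq.continuousOn_laplacian).sub
      (hq.continuousOn.mul hWη.continuousOn_laplacian))
  have integrable_deriv := integrableOn_of_continuousOn_closure (μ := μ) hb <|
    continuousOn_slice (h.continuousOn_carlemanEnergyDeriv hη.contDiff.continuous M lam s) ht
  refine (setIntegral_mono_on integrable_deriv
    ((integrable_G.const_mul _).neg.sub integrable_green) hΩ.measurableSet
    fun x hx => h.carlemanEnergyDeriv_le ht hx hW).trans ?_
  have green := h.setIntegral_green_carlemanWeight_nonneg (μ := μ) (M := M) hη hΩ hb ht hlam hs
  have localized := half_mul_sub_le_setIntegral_mul hΩ.measurableSet hω hωΩ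
    (fun x _ => sq_nonneg ‖∇ η x‖) hc
    (fun x hx => h.carlemanDensity_nonneg (M := M) (lam := lam) (s := s) ht (subset_closure hx))
    (integrableOn_of_continuousOn_closure (μ := μ) hb hd) integrable_G
  calc _ = -((s * lam) ^ 2 *
          ∫ x in Ω, (‖∇ η x‖ ^ 2 - c / 2) * carlemanDensity η T M lam s q (t, x) ∂μ) -
        ∫ x in Ω, (carlemanWeight T M lam s t (η x) * Δ (fun x => q (t, x)) x -
          q (t, x) * Δ (carlemanWeight T M lam s t ∘ η) x) ∂μ := by
        rw [← integral_const_mul, ← integral_neg]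
        exact integral_sub (integrable_G.const_mul _).neg integrable_green
    _ ≤ _ := by linarith [mul_le_mul_of_nonneg_left localized (sq_nonneg (s * lam))]

theorem setIntegral_carlemanDensity_le (h : IsNeumannSupersolution η Ω T A q qt)
    (hη : IsDefiningFunction η Ω) (hΩ : IsOpen Ω) (hb : Bornology.IsBounded Ω)
    (hω : MeasurableSet ω) (hωΩ : ω ⊆ Ω) (hc0 : 0 < c) (hc : ∀ x ∈ Ω \ ω, c ≤ ‖∇ η x‖ ^ 2)
    (hT : 0 < T) (hM : 0 < M) (hηM : ∀ x ∈ Ω, η x ≤ M) (hlam : 0 < lam) (hs : 0 < s)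
    (hW : CarlemanWeightInequality η Ω T A M lam s c) :
    ∫ t in Ioo 0 T, ∫ x in Ω, carlemanDensity η T M lam s q (t, x) ∂μ ≤
      2 * ∫ t in Ioo 0 T, ∫ x in ω, carlemanDensity η T M lam s q (t, x) ∂μ := by
  have hηc := hη.contDiff.continuous
  have tendsto_energy {l : Filter ℝ} := h.tendsto_setIntegral_carlemanWeight_mul (μ := μ) (l := l)
    hb hM hηM hlam hs
  have tendsto_τ (t₀ : ℝ) (S : Set ℝ) (h₀ : t₀ * (T - t₀) = 0) :
      Tendsto (fun t => t * (T - t)) (𝓝[S] t₀) (𝓝 0) :=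
    tendsto_nhdsWithin_of_tendsto_nhds (Continuous.tendsto' (by fun_prop) _ _ h₀)
  have hIΩ := h.integrableOn_setIntegral_carlemanDensity (μ := μ) hηc hb hM hηM hlam hs
    hΩ.measurableSet subset_rfl
  have hIω := h.integrableOn_setIntegral_carlemanDensity (μ := μ) hηc hb hM hηM hlam hs hω hωΩ
  have energy := sub_le_setIntegral_Ioo_of_hasDerivAt_of_le hT
    (fun t ht => h.hasDerivAt_setIntegral_carlemanWeight_mul (μ := μ) hηc hΩ.measurableSet hb ht)
    (tendsto_energy (Ioo_mem_nhdsGT hT) (tendsto_τ 0 _ (zero_mul _)))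
    (tendsto_energy (Ioo_mem_nhdsLT hT) (tendsto_τ T _ (by rw [sub_self, mul_zero])))
    (((hIΩ.sub (hIω.const_mul 2)).const_mul (c / 2)).const_mul ((s * lam) ^ 2)).neg
    fun t ht => h.setIntegral_carlemanEnergyDeriv_le hη hΩ hb hω hωΩ hc ht hlam.le hs.le hW
  simp only [Pi.neg_apply, Pi.sub_apply] at energy
  rw [sub_self, integral_neg, integral_const_mul, integral_const_mul,
    integral_sub hIΩ (hIω.const_mul 2), integral_const_mul, neg_nonneg, ← mul_assoc] at energy
  exact sub_nonpos.1 (nonpos_of_mul_nonpos_right energy (by positivity))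

end IsNeumannSupersolution

theorem carleman_L1_neumann_general [MeasurableSpace E] [BorelSpace E] {μ : Measure E}
    [μ.IsAddHaarMeasure] (hη : IsDefiningFunction η Ω) (hΩ : IsOpen Ω)
    (hb : Bornology.IsBounded Ω) (hω : MeasurableSet ω) (hωΩ : ω ⊆ Ω)
    (hgrad : ∀ x ∈ closure (Ω \ ω), ∇ η x ≠ 0) (hM : 0 < M) (hηM : ∀ x ∈ Ω, η x ≤ M) :
    ∃ C > 0, ∀ T > 0, ∀ A ≥ 0, ∀ lam ≥ 1, ∀ s : ℝ,
      C * exp (4 * lam * M) * (T + T ^ 2 + T ^ 2 * √A) ≤ s →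
      ∀ q qt : ℝ × E → ℝ, IsNeumannSupersolution η Ω T A q qt →
        ∫ t in Ioo 0 T, ∫ x in Ω, carlemanDensity η T M lam s q (t, x) ∂μ ≤
          2 * ∫ t in Ioo 0 T, ∫ x in ω, carlemanDensity η T M lam s q (t, x) ∂μ := by
  obtain ⟨c, hc0, hc⟩ := exists_le_normSq_gradient hη.contDiff hb hgrad
  obtain ⟨C, hC, hW⟩ := exists_carlemanWeightInequality hη hb hM.le hηM hc0
  refine ⟨C, hC, fun T hT A hA lam hlam s hs q qt h => ?_⟩
  have hs0 : 0 < s := lt_of_lt_of_le (by positivity) hs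
  exact h.setIntegral_carlemanDensity_le hη hΩ hb hω hωΩ hc0 hc hT hM hηM
    (zero_lt_one.trans_le hlam) hs0 (hW T A lam s hA hlam hs)

end Supersolutions

section HeatEquation

variable {N : ℕ} {Ω ω₀ : Set (EuclideanSpace ℝ (Fin N))} {η : EuclideanSpace ℝ (Fin N) → ℝ}
  {T : ℝ} {a q qt : ℝ × EuclideanSpace ℝ (Fin N) → ℝ}

theorem isDefiningFunction_of_gradient_ne_zero {E : Type*} [NormedAddCommGroup E]
    [InnerProductSpace ℝ E] [FiniteDimensional ℝ E] {Ω ω₀ : Set E} {η : E → ℝ} (hΩ : IsOpen Ω)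
    (hω₀Ω : closure ω₀ ⊆ Ω) (hη : ContDiff ℝ 2 η) (hpos : ∀ x ∈ Ω, 0 < η x)
    (hbd : ∀ x ∈ frontier Ω, η x = 0) (hgrad : ∀ x ∈ closure (Ω \ ω₀), ∇ η x ≠ 0) :
    IsDefiningFunction η Ω where
  contDiff := hη
  pos := hpos
  eq_zero := hbd
  gradient_ne_zero x hx := hgrad x <| closure_sdiff <| by
    rw [hΩ.frontier_eq] at hx
    exact ⟨hx.1, fun hxω₀ => hx.2 (hω₀Ω hxω₀)⟩

theorem continuousOn_spaceLaplacian_slice {U : Set (ℝ × EuclideanSpace ℝ (Fin N))}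
    (hq : ∀ p ∈ U, DifferentiableAt ℝ (fderiv ℝ fun z => q (p.1, z)) p.2)
    (hq' : ContinuousOn (fun p => fderiv ℝ (fderiv ℝ fun z => q (p.1, z)) p.2) U) :
    ContinuousOn (fun p => spaceLaplacian (fun z => q (p.1, z)) p.2) U := by
  refine ContinuousOn.congr (f := fun p => ∑ i, fderiv ℝ (fderiv ℝ fun z => q (p.1, z)) p.2
    (EuclideanSpace.basisFun _ ℝ i) (EuclideanSpace.basisFun _ ℝ i)) ?_ fun p hp => by
      rw [spaceLaplacian_eq_laplacian (hq p hp),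
        laplacian_eq_sum_fderiv_fderiv (EuclideanSpace.basisFun _ ℝ)]
  exact continuousOn_finsetSum _ fun i _ =>
    (hq'.clm_apply continuousOn_const).clm_apply continuousOn_const

theorem isNeumannSupersolution_of_heatEquation (hΩ : IsOpen Ω) (ha : Measurable a)
    (hab : ∃ B : ℝ, ∀ p ∈ Ioo 0 T ×ˢ Ω, |a p| ≤ B) (hq : ContinuousOn q (Icc 0 T ×ˢ closure Ω))
    (hq0 : ∀ p ∈ Icc 0 T ×ˢ closure Ω, 0 ≤ q p)
    (hqt : ∀ p ∈ Ioo 0 T ×ˢ closure Ω, HasDerivAt (fun τ => q (τ, p.2)) (qt p) p.1)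
    (hqtc : ContinuousOn qt (Ioo 0 T ×ˢ closure Ω))
    (hqd : ∀ p ∈ Ioo 0 T ×ˢ closure Ω, DifferentiableAt ℝ (fun z => q (p.1, z)) p.2)
    (hqd' : ∀ p ∈ Ioo 0 T ×ˢ closure Ω,
      DifferentiableAt ℝ (fderiv ℝ fun z => q (p.1, z)) p.2)
    (hqc' : ContinuousOn (fun p => fderiv ℝ (fderiv ℝ fun z => q (p.1, z)) p.2)
      (Ioo 0 T ×ˢ closure Ω))
    (heq : ∀ t ∈ Ioo 0 T, ∀ x ∈ Ω,
      -qt (t, x) - spaceLaplacian (fun z => q (t, z)) x + a (t, x) * q (t, x) = 0)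
    (hbd : ∀ t ∈ Ioo 0 T, ∀ x ∈ frontier Ω, ⟪∇ (fun z => q (t, z)) x, ∇ η x⟫ = 0) :
    IsNeumannSupersolution η Ω T
      (eLpNorm a ⊤ (volume.restrict (Ioo 0 T ×ˢ Ω))).toReal q qt where
  continuousOn := hq
  nonneg := hq0
  hasDerivAt p hp := hqt p ⟨hp.1, subset_closure hp.2⟩
  continuousOn_deriv := hqtc
  isC2On t ht :=
    { differentiableAt := fun x hx => hqd (t, x) ⟨ht, hx⟩
      differentiableAt_fderiv := fun x hx => hqd' (t, x) ⟨ht, hx⟩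
      continuousOn_fderiv_fderiv := continuousOn_slice hqc' ht }
  deriv_add_laplacian_le t ht x hx := by
    have hUo : IsOpen (Ioo 0 T ×ˢ Ω) := isOpen_Ioo.prod hΩ
    have hU : Ioo 0 T ×ˢ Ω ⊆ Ioo 0 T ×ˢ closure Ω := prod_mono subset_rfl subset_closure
    have hU' : Ioo 0 T ×ˢ Ω ⊆ Icc 0 T ×ˢ closure Ω := prod_mono Ioo_subset_Icc_self subset_closure
    have aq_eq : ∀ p ∈ Ioo 0 T ×ˢ Ω,
        a p * q p = qt p + spaceLaplacian (fun z => q (p.1, z)) p.2 := fun p hp => by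
      linarith [heq p.1 hp.1 p.2 hp.2]
    have aq_continuousOn : ContinuousOn (fun p => a p * q p) (Ioo 0 T ×ˢ Ω) :=
      ((hqtc.add (continuousOn_spaceLaplacian_slice hqd' hqc')).mono hU).congr aq_eq
    obtain ⟨B, hB⟩ := hab
    have ha_memLp : MemLp a ⊤ (volume.restrict (Ioo 0 T ×ˢ Ω)) :=
      memLp_top_of_bound ha.aestronglyMeasurable B
        ((ae_restrict_iff' hUo.measurableSet).2 (.of_forall hB))
    calc qt (t, x) + Δ (fun x => q (t, x)) x = a (t, x) * q (t, x) := by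
          rw [aq_eq (t, x) ⟨ht, hx⟩,
            spaceLaplacian_eq_laplacian (hqd' (t, x) ⟨ht, subset_closure hx⟩)]
      _ ≤ _ := mul_le_eLpNorm_top_mul hUo ha_memLp (hq.mono hU') (fun p hp => hq0 p (hU' hp))
          aq_continuousOn (t, x) ⟨ht, hx⟩
  inner_gradient_nonpos t ht x hx := by
    rw [real_inner_comm, hbd t ht x hx]

end HeatEquation

end CarlemanEstimate

theorem carleman_L1_neumann
    (N : ℕ) (hN : 1 ≤ N)
    (Ω ω₀ ω : Set (EuclideanSpace ℝ (Fin N)))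
    (hΩo : IsOpen Ω) (hΩb : Bornology.IsBounded Ω) (hΩc : IsConnected Ω)
    (hω₀o : IsOpen ω₀) (hω₀ne : ω₀.Nonempty) (hωo : IsOpen ω) (hωne : ω.Nonempty)
    (hω₀ω : closure ω₀ ⊆ ω) (hωΩ : ω ⊆ Ω)
    (η : EuclideanSpace ℝ (Fin N) → ℝ) (hη : ContDiff ℝ 2 η)
    (hηpos : ∀ x ∈ Ω, 0 < η x) (hηbd : ∀ x ∈ frontier Ω, η x = 0)
    (hηgrad : ∀ x ∈ closure (Ω \ ω₀), 0 < ‖gradient η x‖)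
    (M : ℝ) (hM : IsGreatest (η '' closure Ω) M) :
    ∃ C > (0:ℝ), ∃ C₁ > (0:ℝ),
      ∀ T : ℝ, 0 < T →
      ∀ a : ℝ × EuclideanSpace ℝ (Fin N) → ℝ, Measurable a →
      (∃ B : ℝ, ∀ p ∈ Set.Ioo (0:ℝ) T ×ˢ Ω, |a p| ≤ B) →
      ∀ lam : ℝ, 1 ≤ lam →
      ∀ s : ℝ,
        C * Real.exp (4 * lam * M) *
          (T + T ^ 2 + T ^ 2 * Real.sqrt (eLpNorm a ⊤ (volume.restrict (Set.Ioo (0:ℝ) T ×ˢ Ω))).toReal) ≤ s →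
      ∀ q qt : ℝ × EuclideanSpace ℝ (Fin N) → ℝ,
        ContinuousOn q (Set.Icc 0 T ×ˢ closure Ω) →
        (∀ p ∈ Set.Icc 0 T ×ˢ closure Ω, 0 ≤ q p) →
        (∀ p ∈ Set.Ioo 0 T ×ˢ closure Ω,
          HasDerivAt (fun τ => q (τ, p.2)) (qt p) p.1) →
        ContinuousOn qt (Set.Ioo 0 T ×ˢ closure Ω) →
        (∀ p ∈ Set.Ioo 0 T ×ˢ closure Ω,
          DifferentiableAt ℝ (fun z => q (p.1, z)) p.2) →
        (∀ p ∈ Set.Ioo 0 T ×ˢ closure Ω,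
          DifferentiableAt ℝ (fun y => fderiv ℝ (fun z => q (p.1, z)) y) p.2) →
        ContinuousOn (fun p : ℝ × EuclideanSpace ℝ (Fin N) =>
          fderiv ℝ (fun z => q (p.1, z)) p.2) (Set.Ioo 0 T ×ˢ closure Ω) →
        ContinuousOn (fun p : ℝ × EuclideanSpace ℝ (Fin N) =>
          fderiv ℝ (fun y => fderiv ℝ (fun z => q (p.1, z)) y) p.2)
          (Set.Ioo 0 T ×ˢ closure Ω) →
        (∀ t ∈ Set.Ioo (0:ℝ) T, ∀ x ∈ Ω,
          -qt (t, x) - spaceLaplacian (fun z => q (t, z)) x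
            + a (t, x) * q (t, x) = 0) →
        (∀ t ∈ Set.Ioo (0:ℝ) T, ∀ x ∈ frontier Ω,
          ⟪gradient (fun z => q (t, z)) x, gradient η x⟫ = 0) →
        (∫ t in Set.Ioo (0:ℝ) T, ∫ x in Ω,
            Real.exp (-s * ((Real.exp (2 * lam * M) - Real.exp (lam * η x)) / (t * (T - t)))) * (Real.exp (lam * η x) / (t * (T - t))) ^ 2 * q (t, x))
          ≤ C₁ * ∫ t in Set.Ioo (0:ℝ) T, ∫ x in ω,
            Real.exp (-s * ((Real.exp (2 * lam * M) - Real.exp (lam * η x)) / (t * (T - t)))) * (Real.exp (lam * η x) / (t * (T - t))) ^ 2 * q (t, x) := by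
  have hη_def := isDefiningFunction_of_gradient_ne_zero hΩo (hω₀ω.trans hωΩ) hη hηpos hηbd
    fun x hx => norm_pos_iff.1 (hηgrad x hx)
  have hηM : ∀ x ∈ Ω, η x ≤ M := fun x hx => hM.2 ⟨x, subset_closure hx, rfl⟩
  obtain ⟨x, hx⟩ := hωne.mono hωΩ
  obtain ⟨C, hC, carleman⟩ := carleman_L1_neumann_general (μ := volume) hη_def hΩo hΩb
    hωo.measurableSet hωΩ
    (fun x hx => norm_pos_iff.1 (hηgrad x
      (closure_mono (sdiff_subset_sdiff_right (subset_closure.trans hω₀ω)) hx)))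
    ((hηpos x hx).trans_le (hηM x hx)) hηM
  exact ⟨C, hC, 2, two_pos, fun T hT a ha hab lam hlam s hs q qt hq hq0 hqt hqtc hqd hqd' _ hqc'
    heq hbd => carleman T hT _ ENNReal.toReal_nonneg lam hlam s hs q qt
      (isNeumannSupersolution_of_heatEquation hΩo ha hab hq hq0 hqt hqtc hqd hqd' hqc' heq hbd)⟩
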